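/- Let Ω ⊂ ℝⁿ be a bounded open set with smooth boundary, T > 0, and let F be continuous, uniformly elliptic with constants 0 < λ ≤ Λ, satisfying the structure condition with constant γ, the joint modulus bound |F(M,P,r,x,t) - F(M,P,r,y,s)| ≤ σ₁(|x-y|) + σ₂(|t-s|) with σ₂(h) ≤ C₀h, and sup_{(x,t)}|F(0,0,0,x,t)| ≤ K. Suppose that for every h ∈ (0,1] the Rothe approximations z_{n,h} exist. Then there exists a continuous function u on Ω̄ × [0,T] which is a viscosity solution of u_t + F(D²u, Du, u, x, t) = 0 in Ω × (0,T], vanishes on the parabolic boundary (u = 0 on ∂Ω × [0,T] and u(·,0) = 0 on Ω̄), and is Lipschitz in time: there is a constant C with |u(x,t) - u(x,s)| ≤ C|t-s| for all x ∈ Ω̄ and t, s ∈ [0,T]. -/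

import Mathlib

/-!
The solution is a limit of the Rothe approximations as the step tends to zero, which rests on
estimates for them that are uniform in the step.

Each of these estimates follows from comparison for the elliptic problems with the zeroth-order
term `z / h`. To compare a subsolution `u` with a supersolution `v`, one regularises `u` and `-v`
by sup-convolution, which makes them semiconvex. By Alexandrov's theorem, obtained by
differentiating the resolvent of the subdifferential, and Jensen's lemma there is a point near the
maximum of the difference where both have second-order expansions, and these transfer to
paraboloids touching `u` and `v`.

Comparing consecutive Rothe steps shows that their difference quotient is at most `K + C₀ T`: it
starts below `K`, and the time dependence of the operator adds at most `C₀ h` per step. Once the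
discrete time derivative is bounded, a single barrier `A (1 - exp (μ f))`, where `f` is the defining
function of `Ω`, dominates all approximations up to time `T`. Comparing an approximation with its
translates, whose boundary values are controlled by the barrier, gives equicontinuity in space.

Hence along an ultrafilter of steps tending to zero the approximations, taken piecewise constant in
time, converge uniformly to a function `u` that inherits the Lipschitz bound in time and the
boundary values. If a strict test function touched `u` from above, a quartic perturbation would
make the contact strict, so nearby there would be a grid point where the approximation minus the
test function is maximal, and the viscosity inequality of that Rothe step contradicts strictness.
Supersolutions reduce to subsolutions by the symmetry `F ↦ -F(-M, -P, -r, x, t)`.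
-/

open scoped RealInnerProductSpace
open MeasureTheory Filter Topology Asymptotics Metric Set

noncomputable section

abbrev Eucl (d : ℕ) := EuclideanSpace ℝ (Fin d)

open Classical in
noncomputable def eigs {d : ℕ} (M : Matrix (Fin d) (Fin d) ℝ) : Fin d → ℝ :=
  if h : M.IsHermitian then h.eigenvalues else 0

noncomputable def specNorm {d : ℕ} (M : Matrix (Fin d) (Fin d) ℝ) : ℝ := ⨆ i, |eigs M i|
noncomputable def posPartNorm {d : ℕ} (M : Matrix (Fin d) (Fin d) ℝ) : ℝ := ⨆ i, max (eigs M i) 0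
noncomputable def negPartNorm {d : ℕ} (M : Matrix (Fin d) (Fin d) ℝ) : ℝ := ⨆ i, max (-(eigs M i)) 0
noncomputable def posPartTrace {d : ℕ} (M : Matrix (Fin d) (Fin d) ℝ) : ℝ := ∑ i, max (eigs M i) 0
noncomputable def negPartTrace {d : ℕ} (M : Matrix (Fin d) (Fin d) ℝ) : ℝ := ∑ i, max (-(eigs M i)) 0

noncomputable def pucciPlus {d : ℕ} (lam Lam : ℝ) (M : Matrix (Fin d) (Fin d) ℝ) : ℝ :=
  -lam * posPartTrace M + Lam * negPartTrace M

noncomputable def pucciMinus {d : ℕ} (lam Lam : ℝ) (M : Matrix (Fin d) (Fin d) ℝ) : ℝ :=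
  -Lam * posPartTrace M + lam * negPartTrace M

noncomputable def gradAt {d : ℕ} (φ : Eucl d → ℝ) (x : Eucl d) : Eucl d :=
  (EuclideanSpace.equiv (Fin d) ℝ).symm (fun i => fderiv ℝ φ x (EuclideanSpace.single i 1))

noncomputable def hessAt {d : ℕ} (φ : Eucl d → ℝ) (x : Eucl d) : Matrix (Fin d) (Fin d) ℝ :=
  Matrix.of fun i j =>
    fderiv ℝ (fun y => fderiv ℝ φ y (EuclideanSpace.single j 1)) x (EuclideanSpace.single i 1)

noncomputable def quadForm {d : ℕ} (M : Matrix (Fin d) (Fin d) ℝ) (v : Eucl d) : ℝ :=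
  ∑ i, ∑ j, M i j * v i * v j

def ViscSubsol {d : ℕ} (Ω : Set (Eucl d))
    (G : Matrix (Fin d) (Fin d) ℝ → Eucl d → ℝ → Eucl d → ℝ)
    (g : Eucl d → ℝ) (u : Eucl d → ℝ) : Prop :=
  ∀ x₀ ∈ Ω, ∀ φ : Eucl d → ℝ, ContDiffAt ℝ 2 φ x₀ →
    IsLocalMax (fun x => u x - φ x) x₀ →
    G (hessAt φ x₀) (gradAt φ x₀) (u x₀) x₀ ≤ g x₀

def ViscSupersol {d : ℕ} (Ω : Set (Eucl d))
    (G : Matrix (Fin d) (Fin d) ℝ → Eucl d → ℝ → Eucl d → ℝ)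
    (g : Eucl d → ℝ) (u : Eucl d → ℝ) : Prop :=
  ∀ x₀ ∈ Ω, ∀ φ : Eucl d → ℝ, ContDiffAt ℝ 2 φ x₀ →
    IsLocalMin (fun x => u x - φ x) x₀ →
    g x₀ ≤ G (hessAt φ x₀) (gradAt φ x₀) (u x₀) x₀

def ViscSol {d : ℕ} (Ω : Set (Eucl d))
    (G : Matrix (Fin d) (Fin d) ℝ → Eucl d → ℝ → Eucl d → ℝ)
    (g : Eucl d → ℝ) (u : Eucl d → ℝ) : Prop :=
  ViscSubsol Ω G g u ∧ ViscSupersol Ω G g u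

def UniformlyElliptic {d : ℕ} (lam Lam : ℝ) (X : Set (Eucl d)) (Tset : Set ℝ)
    (F : Matrix (Fin d) (Fin d) ℝ → Eucl d → ℝ → Eucl d → ℝ → ℝ) : Prop :=
  ∀ M N : Matrix (Fin d) (Fin d) ℝ, M.IsSymm → N.PosSemidef →
    ∀ (P : Eucl d) (v : ℝ), ∀ x ∈ X, ∀ t ∈ Tset,
      -Lam * specNorm N ≤ F (M + N) P v x t - F M P v x t ∧
      F (M + N) P v x t - F M P v x t ≤ -lam * specNorm N

def IsModulus (σ : ℝ → ℝ) : Prop := Monotone σ ∧ Continuous σ ∧ σ 0 = 0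

def StructureCondition {d : ℕ} (lam Lam gam : ℝ) (ω : ℝ → ℝ → ℝ)
    (X : Set (Eucl d)) (Tset : Set ℝ)
    (F : Matrix (Fin d) (Fin d) ℝ → Eucl d → ℝ → Eucl d → ℝ → ℝ) : Prop :=
  (∀ R > 0, IsModulus (ω R)) ∧
  ∀ R > 0, ∀ M N : Matrix (Fin d) (Fin d) ℝ, M.IsSymm → N.IsSymm →
    ∀ (P Q : Eucl d) (r s : ℝ), |r| ≤ R → |s| ≤ R → ∀ x ∈ X, ∀ t ∈ Tset,
      pucciMinus lam Lam (M - N) - gam * ‖P - Q‖ - ω R (max (s - r) 0)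
          ≤ F M P r x t - F N Q s x t ∧
      F M P r x t - F N Q s x t
          ≤ pucciPlus lam Lam (M - N) + gam * ‖P - Q‖ + ω R (max (r - s) 0)

noncomputable def supConv {d : ℕ} (Ω : Set (Eucl d)) (u : Eucl d → ℝ) (ε : ℝ) (x : Eucl d) : ℝ :=
  sSup ((fun y => u y - ‖x - y‖ ^ 2 / (2 * ε)) '' closure Ω)

noncomputable def infConv {d : ℕ} (Ω : Set (Eucl d)) (u : Eucl d → ℝ) (ε : ℝ) (x : Eucl d) : ℝ :=
  sInf ((fun y => u y + ‖x - y‖ ^ 2 / (2 * ε)) '' closure Ω)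

noncomputable def supNorm {d : ℕ} (Ω : Set (Eucl d)) (u : Eucl d → ℝ) : ℝ :=
  sSup ((fun y => |u y|) '' closure Ω)

def RotheStep {d : ℕ} (Ω : Set (Eucl d))
    (F : Matrix (Fin d) (Fin d) ℝ → Eucl d → ℝ → Eucl d → ℝ → ℝ)
    (h : ℝ) (m : ℕ) (zprev znext : Eucl d → ℝ) : Prop :=
  ContinuousOn znext (closure Ω) ∧
  ViscSol Ω (fun M P r x => F M P r x ((m + 1) * h) + r / h) (fun x => zprev x / h) znext ∧
  ∀ x ∈ frontier Ω, znext x = 0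

noncomputable def rotheInterp {d : ℕ} (z : ℕ → Eucl d → ℝ) (h : ℝ) (x : Eucl d) (t : ℝ) : ℝ :=
  ((⌊t / h⌋₊ + 1 : ℝ) * h - t) / h * z ⌊t / h⌋₊ x + (t - (⌊t / h⌋₊ : ℝ) * h) / h * z (⌊t / h⌋₊ + 1) x

def HasSmoothBoundary {d : ℕ} (Ω : Set (Eucl d)) : Prop :=
  ∃ f : Eucl d → ℝ, ContDiff ℝ (⊤ : ℕ∞) f ∧ Ω = {x | f x < 0} ∧ ∀ x ∈ frontier Ω, fderiv ℝ f x ≠ 0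

def C21 {d : ℕ} (φ : Eucl d → ℝ → ℝ) : Prop :=
  (∀ t, ContDiff ℝ 2 fun x => φ x t) ∧
  (∀ x, ContDiff ℝ 1 fun t => φ x t) ∧
  Continuous (fun p : Eucl d × ℝ => φ p.1 p.2) ∧
  Continuous (fun p : Eucl d × ℝ => hessAt (fun x => φ x p.2) p.1) ∧
  Continuous (fun p : Eucl d × ℝ => gradAt (fun x => φ x p.2) p.1) ∧
  Continuous (fun p : Eucl d × ℝ => deriv (φ p.1) p.2)

def ParabolicViscSubsol {d : ℕ} (Ω : Set (Eucl d)) (T : ℝ)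
    (F : Matrix (Fin d) (Fin d) ℝ → Eucl d → ℝ → Eucl d → ℝ → ℝ)
    (u : Eucl d × ℝ → ℝ) : Prop :=
  ∀ φ : Eucl d → ℝ → ℝ, C21 φ → ∀ ε > (0:ℝ),
    (∀ x ∈ closure Ω, ∀ t ∈ Icc (0:ℝ) T,
      ε ≤ deriv (φ x) t +
        F (hessAt (fun y => φ y t) x) (gradAt (fun y => φ y t) x) (φ x t) x t) →
    ¬ ∃ p ∈ Ω ×ˢ Ioc (0:ℝ) T,
        IsLocalMaxOn (fun q : Eucl d × ℝ => u q - φ q.1 q.2) (Ω ×ˢ Ioc (0:ℝ) T) p ∧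
        u p - φ p.1 p.2 = 0

def ParabolicViscSupersol {d : ℕ} (Ω : Set (Eucl d)) (T : ℝ)
    (F : Matrix (Fin d) (Fin d) ℝ → Eucl d → ℝ → Eucl d → ℝ → ℝ)
    (u : Eucl d × ℝ → ℝ) : Prop :=
  ∀ φ : Eucl d → ℝ → ℝ, C21 φ → ∀ ε > (0:ℝ),
    (∀ x ∈ closure Ω, ∀ t ∈ Icc (0:ℝ) T,
      deriv (φ x) t +
        F (hessAt (fun y => φ y t) x) (gradAt (fun y => φ y t) x) (φ x t) x t ≤ -ε) →
    ¬ ∃ p ∈ Ω ×ˢ Ioc (0:ℝ) T,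
        IsLocalMinOn (fun q : Eucl d × ℝ => u q - φ q.1 q.2) (Ω ×ˢ Ioc (0:ℝ) T) p ∧
        u p - φ p.1 p.2 = 0

/-! ### Second-order differentiability of semiconvex functions -/

section Semiconvex

variable {E : Type*} [NormedAddCommGroup E] [InnerProductSpace ℝ E]
  {c : ℝ} {f : E → ℝ} {x y p q : E}

/-- `p` is a proximal subgradient of `f` at `x` with a constant `c` and a global inequality. For
`c = 0` this is the subgradient of convex analysis. -/
def IsProximalSubgradient (c : ℝ) (f : E → ℝ) (x p : E) : Prop :=
  ∀ y, f x + ⟪p, y - x⟫ - c * ‖y - x‖ ^ 2 ≤ f y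

/-- `f` is semiconvex with constant `c`, encoded by the existence of proximal subgradients; in
finite dimension this is the convexity of `f + c ‖·‖²`. -/
def IsSemiconvex (c : ℝ) (f : E → ℝ) : Prop :=
  ∀ x, ∃ p, IsProximalSubgradient c f x p

/-- The quadratic polynomial with gradient `p` at `x`, Hessian the symmetric part of `B`, and value
`0` at `x`. -/
def quadPoly (p : E) (B : E →L[ℝ] E) (x z : E) : ℝ :=
  ⟪p, z - x⟫ + 2⁻¹ * ⟪B (z - x), z - x⟫

/-- The second-order Taylor expansion of `f` at a single point `x`, as in Alexandrov's theorem. The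
operator `B` need not be symmetric. -/
def HasSecondOrderExpansion (f : E → ℝ) (p : E) (B : E →L[ℝ] E) (x : E) : Prop :=
  (fun z => f z - f x - quadPoly p B x z) =o[𝓝 x] fun z => ‖z - x‖ ^ 2

lemma IsProximalSubgradient.neg_le_inner_sub (hp : IsProximalSubgradient c f x p)
    (hq : IsProximalSubgradient c f y q) : -(2 * c * ‖x - y‖ ^ 2) ≤ ⟪x - y, p - q⟫ := by
  have hxy := hp y
  have hyx := hq x
  rw [← neg_sub x y, inner_neg_right, norm_neg, real_inner_comm] at hxy
  rw [real_inner_comm] at hyx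
  rw [inner_sub_right]
  linarith

lemma IsProximalSubgradient.norm_sub_le (hp : IsProximalSubgradient c f x p)
    (hq : IsProximalSubgradient c f y q) :
    ‖x - y‖ ≤ ‖((1 + 2 * c) • x + p) - ((1 + 2 * c) • y + q)‖ := by
  set w := ((1 + 2 * c) • x + p) - ((1 + 2 * c) • y + q) with hw
  have hinner : ‖x - y‖ ^ 2 ≤ ⟪x - y, w⟫ := by
    have : w = (1 + 2 * c) • (x - y) + (p - q) := by rw [hw]; module
    rw [this, inner_add_right, real_inner_smul_right, real_inner_self_eq_norm_sq]
    linarith [hp.neg_le_inner_sub hq]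
  rcases (norm_nonneg (x - y)).eq_or_lt with h0 | hpos
  · exact h0 ▸ norm_nonneg w
  · refine le_of_mul_le_mul_left ?_ hpos
    linarith [real_inner_le_norm (x - y) w, sq ‖x - y‖]

lemma exists_lipschitzWith_resolvent [FiniteDimensional ℝ E] (c : ℝ) (f : E → ℝ) :
    ∃ (J : E → E) (K : NNReal), LipschitzWith K J ∧
      ∀ x p, IsProximalSubgradient c f x p → J ((1 + 2 * c) • x + p) = x := by
  let G := {a : E × E // IsProximalSubgradient c f a.1 a.2}
  let S : G → E := fun a => (1 + 2 * c) • a.1.1 + a.1.2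
  let j : E → E := Function.extend S (fun a => a.1.1) 0
  have hfactors : Function.FactorsThrough (fun a : G => a.1.1) S := fun a b hab => by
    have h := a.2.norm_sub_le b.2
    rw [show (1 + 2 * c) • a.1.1 + a.1.2 = (1 + 2 * c) • b.1.1 + b.1.2 from hab, sub_self,
      norm_zero, norm_le_zero_iff] at h
    exact sub_eq_zero.mp h
  have hj : ∀ a, j (S a) = a.1.1 := hfactors.extend_apply 0
  have hlip : LipschitzOnWith 1 j (range S) := by
    refine LipschitzOnWith.of_dist_le_mul ?_
    rintro _ ⟨a, rfl⟩ _ ⟨b, rfl⟩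
    rw [hj, hj, dist_eq_norm, dist_eq_norm, NNReal.coe_one, one_mul]
    exact a.2.norm_sub_le b.2
  obtain ⟨J, hJ, hJj⟩ := hlip.extend_finite_dimension
  exact ⟨J, _, hJ, fun x p hp => (hJj ⟨⟨(x, p), hp⟩, rfl⟩).symm.trans (hj ⟨(x, p), hp⟩)⟩

lemma IsProximalSubgradient.add_smul_sub (hp : IsProximalSubgradient c f x p)
    (hq : IsProximalSubgradient c f x q) {s : ℝ} (hs : s ∈ Icc (0 : ℝ) 1) :
    IsProximalSubgradient c f x (p + s • (q - p)) := by
  intro y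
  rw [inner_add_left, real_inner_smul_left, inner_sub_left]
  have h₁ := mul_le_mul_of_nonneg_left (hp y) (sub_nonneg.mpr hs.2)
  have h₂ := mul_le_mul_of_nonneg_left (hq y) hs.1
  linarith

-- Two proximal subgradients at `x` would make the resolvent constant along a segment.
lemma IsProximalSubgradient.eq_of_injective {J : E → E} {D : E →L[ℝ] E} {t : ℝ}
    (hJ : ∀ q, IsProximalSubgradient c f x q → J (t • x + q) = x)
    (hp : IsProximalSubgradient c f x p) (hq : IsProximalSubgradient c f x q)
    (hD : HasFDerivAt J D (t • x + p)) (hinj : Function.Injective D) : q = p := by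
  have hline : HasDerivWithinAt (fun s : ℝ => J (t • x + p + s • (q - p))) (D (q - p))
      (Icc 0 1) 0 := by
    have hpath : HasDerivAt (fun s : ℝ => t • x + p + s • (q - p)) (q - p) 0 := by
      simpa using ((hasDerivAt_id (0 : ℝ)).smul_const (q - p)).const_add (t • x + p)
    exact (HasFDerivAt.comp_hasDerivAt 0 (by simpa using hD) hpath).hasDerivWithinAt
  have hconst : HasDerivWithinAt (fun s : ℝ => J (t • x + p + s • (q - p))) 0 (Icc 0 1) 0 :=
    (hasDerivWithinAt_const 0 _ x).congr
      (fun s hs => by rw [add_assoc]; exact hJ _ (hp.add_smul_sub hq hs))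
      (by simpa using hJ p hp)
  have hzero : D (q - p) = D 0 := by
    rw [map_zero]
    exact (uniqueDiffOn_Icc_zero_one 0 (by simp)).eq_deriv _ hline hconst
  exact sub_eq_zero.mp (hinj hzero)

lemma isClosed_setOf_isProximalSubgradient (hf : Continuous f) :
    IsClosed {a : E × E | IsProximalSubgradient c f a.1 a.2} := by
  simp only [IsProximalSubgradient, ofPred_forall]
  exact isClosed_iInter fun y => isClosed_le (by fun_prop) continuous_const

lemma exists_eventually_norm_le_of_isProximalSubgradient (hc : 0 ≤ c) (hf : ContinuousAt f x) :
    ∃ L, ∀ᶠ y in 𝓝 x, ∀ p, IsProximalSubgradient c f y p → ‖p‖ ≤ L := by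
  obtain ⟨r, hr, hfr⟩ := Metric.continuousAt_iff.mp hf 1 one_pos
  refine ⟨(2 + c * (r / 2) ^ 2) / (r / 2), ?_⟩
  filter_upwards [ball_mem_nhds x (half_pos hr)] with y hy p hp
  rcases (norm_nonneg p).eq_or_lt with h0 | hpos
  · rw [← h0]; positivity
  set v := (r / 2 / ‖p‖) • p with hv
  have hv_norm : ‖v‖ = r / 2 := by
    rw [hv, norm_smul, Real.norm_of_nonneg (by positivity), div_mul_cancel₀ _ hpos.ne']
  have hpv : ⟪p, v⟫ = ‖p‖ * (r / 2) := by
    rw [hv, real_inner_smul_right, real_inner_self_eq_norm_sq]; field_simp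
  have hfy : |f y - f x| < 1 := hfr ((mem_ball.mp hy).trans (half_lt_self hr))
  have hfyv : |f (y + v) - f x| < 1 := by
    refine hfr ?_
    calc dist (y + v) x ≤ dist (y + v) y + dist y x := dist_triangle _ _ _
      _ < r / 2 + r / 2 := by
        rw [dist_self_add_left, hv_norm]
        exact add_lt_add_right (mem_ball.mp hy) _
      _ = r := add_halves r
  have hsub := hp (y + v)
  rw [add_sub_cancel_left, hpv, hv_norm] at hsub
  rw [le_div_iff₀ (half_pos hr)]
  linarith [abs_lt.mp hfy, abs_lt.mp hfyv]

lemma continuousAt_of_isProximalSubgradient_unique [FiniteDimensional ℝ E] {P : E → E}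
    (hc : 0 ≤ c) (hf : Continuous f) (hP : ∀ y, IsProximalSubgradient c f y (P y))
    (huniq : ∀ q, IsProximalSubgradient c f x q → q = P x) : ContinuousAt P x := by
  obtain ⟨L, hL⟩ := exists_eventually_norm_le_of_isProximalSubgradient hc hf.continuousAt (x := x)
  refine (isCompact_closedBall (0 : E) L).tendsto_nhds_of_unique_mapClusterPt
    (hL.mono fun y hy => mem_closedBall_zero_iff.mpr (hy _ (hP y))) fun q _ hq => huniq q ?_
  obtain ⟨𝒰, h𝒰, hlim⟩ := mapClusterPt_iff_ultrafilter.mp hq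
  exact (isClosed_setOf_isProximalSubgradient hf).mem_of_tendsto
    ((tendsto_id'.mpr h𝒰).prodMk_nhds hlim) (Eventually.of_forall hP)

lemma IsSemiconvex.continuous [FiniteDimensional ℝ E] (hf : IsSemiconvex c f) :
    Continuous f := by
  have hconvex : ConvexOn ℝ univ fun x => f x + c * ‖x‖ ^ 2 := by
    refine ⟨convex_univ, fun x _ y _ a b ha hb hab => ?_⟩
    set z := a • x + b • y with hz
    obtain ⟨p, hp⟩ := hf z
    have haffine : ∀ w, f z + c * ‖z‖ ^ 2 + ⟪p + (2 * c) • z, w - z⟫ ≤ f w + c * ‖w‖ ^ 2 := by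
      intro w
      have hsq := norm_add_sq_real z (w - z)
      rw [add_sub_cancel] at hsq
      rw [inner_add_left, real_inner_smul_left, hsq]
      linarith [hp w]
    have hbary : a * ⟪p + (2 * c) • z, x - z⟫ + b * ⟪p + (2 * c) • z, y - z⟫ = 0 := by
      rw [← real_inner_smul_right, ← real_inner_smul_right, ← inner_add_right,
        show a • (x - z) + b • (y - z) = z - (a + b) • z by rw [hz]; module, hab, one_smul,
        sub_self, inner_zero_right]
    have hx := mul_le_mul_of_nonneg_left (haffine x) ha
    have hy := mul_le_mul_of_nonneg_left (haffine y) hb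
    simp only [smul_eq_mul]
    linear_combination hx + hy - hbary - (f z + c * ‖z‖ ^ 2) * hab
  exact (hconvex.locallyLipschitz.continuous.sub
    (by fun_prop : Continuous fun x : E => c * ‖x‖ ^ 2)).congr fun x => add_sub_cancel_right _ _

lemma sub_le_of_slope_le {g : ℝ → ℝ} {α β m : ℝ} (hg : Continuous g)
    (h : ∀ s ∈ Icc (0 : ℝ) 1, ∀ t ∈ Icc (0 : ℝ) 1, s < t →
      g t - g s ≤ (α + β * t + m * (t - s)) * (t - s)) :
    g 1 - g 0 ≤ α + 2⁻¹ * β := by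
  have hmajorant : g 1 ≤ g 0 + α * 1 + 2⁻¹ * β * 1 ^ 2 := by
    refine image_le_of_liminf_slope_right_le_deriv_boundary 
      (B := fun s => g 0 + α * s + 2⁻¹ * β * s ^ 2) (B' := fun s => α + β * s)
      hg.continuousOn (by simp) (by fun_prop) (fun s _ => ?_) (fun s hs r hr => ?_)
      (right_mem_Icc.mpr zero_le_one)
    · have := ((((hasDerivAt_id s).const_mul α).const_add (g 0)).add
        ((hasDerivAt_pow 2 s).const_mul (2⁻¹ * β))).hasDerivWithinAt (s := Ici s)
      exact this.congr_deriv (by push_cast; ring)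
    · have hlim : Tendsto (fun t => α + β * t + m * (t - s)) (𝓝[>] s) (𝓝 (α + β * s)) := by
        refine Tendsto.mono_left (Continuous.tendsto' (by fun_prop) _ _ ?_) nhdsWithin_le_nhds
        ring
      refine Eventually.frequently ?_
      filter_upwards [hlim.eventually_lt_const hr, Ioc_mem_nhdsGT hs.2] with t ht hst
      rw [slope_def_field]
      exact ((div_le_iff₀ (sub_pos.mpr hst.1)).mpr (h s ⟨hs.1, hs.2.le⟩ t
        ⟨hs.1.trans hst.1.le, hst.2⟩ hst.1)).trans_lt ht
  linarith

lemma abs_sub_sub_le_of_slope_near_affine {g q : ℝ → ℝ} {α β m C : ℝ} (hg : Continuous g)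
    (hq : ∀ s t, q s * (t - s) - m * (t - s) ^ 2 ≤ g t - g s)
    (hC : ∀ s ∈ Icc (0 : ℝ) 1, |q s - (α + β * s)| ≤ C) :
    |g 1 - g 0 - (α + 2⁻¹ * β)| ≤ C := by
  have hupper : g 1 - g 0 ≤ (α + C) + 2⁻¹ * β := by
    refine sub_le_of_slope_le (m := m) hg fun s _ t ht hst => ?_
    have hqt := mul_le_mul_of_nonneg_right (abs_le.mp (hC t ht)).2 (sub_nonneg.mpr hst.le)
    linarith [hq t s]
  have hlower : -g 1 - -g 0 ≤ (-α + C) + 2⁻¹ * -β := by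
    refine sub_le_of_slope_le (m := m + β) (g := fun s => -g s) hg.neg fun s hs t _ hst => ?_
    have hqs := mul_le_mul_of_nonneg_right (abs_le.mp (hC s hs)).1 (sub_nonneg.mpr hst.le)
    linarith [hq s t]
  rw [abs_le]
  constructor <;> linarith

lemma hasSecondOrderExpansion_of_hasFDerivAt {P : E → E} {B : E →L[ℝ] E} (hf : Continuous f)
    (hP : ∀ y, IsProximalSubgradient c f y (P y)) (hB : HasFDerivAt P B x) :
    HasSecondOrderExpansion f (P x) B x := by
  refine isLittleO_iff.mpr fun η hη => ?_
  obtain ⟨r, hr, hPr⟩ := Metric.eventually_nhds_iff_ball.mp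
    (isLittleO_iff.mp (hasFDerivAt_iff_isLittleO.mp hB) hη)
  filter_upwards [ball_mem_nhds x hr] with z hz
  set v := z - x with hv
  have hgrad : ∀ s ∈ Icc (0 : ℝ) 1,
      |⟪P (x + s • v), v⟫ - (⟪P x, v⟫ + ⟪B v, v⟫ * s)| ≤ η * ‖v‖ ^ 2 := by
    intro s hs
    have hsv : ‖s • v‖ ≤ ‖v‖ := by
      rw [norm_smul, Real.norm_of_nonneg hs.1]
      exact mul_le_of_le_one_left (norm_nonneg v) hs.2
    have hmem : x + s • v ∈ ball x r := by
      rw [mem_ball, dist_self_add_left]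
      exact hsv.trans_lt (mem_ball_iff_norm.mp hz)
    have hlin := hPr _ hmem
    rw [add_sub_cancel_left] at hlin
    calc |⟪P (x + s • v), v⟫ - (⟪P x, v⟫ + ⟪B v, v⟫ * s)|
        = |⟪P (x + s • v) - P x - B (s • v), v⟫| := by
          rw [inner_sub_left, inner_sub_left, map_smul, real_inner_smul_left]; ring_nf
      _ ≤ ‖P (x + s • v) - P x - B (s • v)‖ * ‖v‖ := abs_real_inner_le_norm _ _
      _ ≤ η * ‖v‖ * ‖v‖ := by gcongr; exact hlin.trans (by gcongr)
      _ = η * ‖v‖ ^ 2 := by ring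
  have hslope : ∀ s t : ℝ, ⟪P (x + s • v), v⟫ * (t - s) - c * ‖v‖ ^ 2 * (t - s) ^ 2
      ≤ f (x + t • v) - f (x + s • v) := by
    intro s t
    have h := hP (x + s • v) (x + t • v)
    rw [add_sub_add_left_eq_sub, ← sub_smul, real_inner_smul_right, norm_smul, mul_pow,
      Real.norm_eq_abs, sq_abs] at h
    linarith
  have hbound := abs_sub_sub_le_of_slope_near_affine
    (hf.comp (by fun_prop : Continuous fun s : ℝ => x + s • v)) hslope hgrad
  rw [Real.norm_eq_abs, Real.norm_of_nonneg (sq_nonneg _), quadPoly, ← hv]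
  simpa [hv] using hbound

variable [FiniteDimensional ℝ E]

lemma hasSecondOrderExpansion_of_resolvent {J : E → E} {P : E → E} {D : E →L[ℝ] E} {t : ℝ}
    (hc : 0 ≤ c) (hf : Continuous f) (hP : ∀ y, IsProximalSubgradient c f y (P y))
    (hJ : ∀ y q, IsProximalSubgradient c f y q → J (t • y + q) = y)
    (hD : HasFDerivAt J D (t • x + P x)) (hdet : D.det ≠ 0) :
    ∃ B, HasSecondOrderExpansion f (P x) B x := by
  let D' := D.toContinuousLinearEquivOfDetNeZero hdet
  have hPx : ContinuousAt P x := continuousAt_of_isProximalSubgradient_unique hc hf hP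
    fun q hq => (hP x).eq_of_injective (hJ x) hq hD D'.injective
  have hinv : HasFDerivAt (fun y => t • y + P y) (D'.symm : E →L[ℝ] E) x :=
    HasFDerivAt.of_local_left_inverse (continuousAt_id.const_smul t |>.add hPx) (by exact hD)
      (Eventually.of_forall fun y => hJ y _ (hP y))
  refine ⟨_, hasSecondOrderExpansion_of_hasFDerivAt hf hP
    (B := (D'.symm : E →L[ℝ] E) - t • ContinuousLinearMap.id ℝ E) ?_⟩
  exact (hinv.sub ((hasFDerivAt_id x).const_smul t)).congr_of_eventuallyEq
    (Eventually.of_forall fun y => (add_sub_cancel_left (t • y) (P y)).symm)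

variable [MeasurableSpace E] [BorelSpace E]

lemma addHaar_image_eq_zero_of_lipschitzOnWith (μ : Measure E) [μ.IsAddHaarMeasure] {g : E → E}
    {K : NNReal} {s : Set E} (hg : LipschitzOnWith K g s) (hs : μ s = 0) : μ (g '' s) = 0 := by
  let ν : Measure E := Measure.hausdorffMeasure (Module.finrank ℝ E : ℝ)
  have : ν.IsAddHaarMeasure := isAddHaarMeasure_hausdorffMeasure
  refine Measure.absolutelyContinuous_isAddHaarMeasure μ ν ?_
  have himage := hg.hausdorffMeasure_image_le (Nat.cast_nonneg (Module.finrank ℝ E))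
  rw [show Measure.hausdorffMeasure (Module.finrank ℝ E : ℝ) s = 0 from
    Measure.absolutelyContinuous_isAddHaarMeasure ν μ hs, mul_zero] at himage
  exact le_zero_iff.mp himage

theorem alexandrov (μ : Measure E) [μ.IsAddHaarMeasure] (hc : 0 ≤ c) (hf : IsSemiconvex c f) :
    ∀ᵐ x ∂μ, ∃ p B, HasSecondOrderExpansion f p B x := by
  obtain ⟨J, K, hJ_lip, hJ⟩ := exists_lipschitzWith_resolvent c f
  choose P hP using hf
  set N₁ : Set E := {y | ¬ DifferentiableAt ℝ J y}
  set N₂ : Set E := {y | DifferentiableAt ℝ J y ∧ (fderiv ℝ J y).det = 0}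
  have hN₁ : μ (J '' N₁) = 0 :=
    addHaar_image_eq_zero_of_lipschitzOnWith μ hJ_lip.lipschitzOnWith hJ_lip.ae_differentiableAt
  have hN₂ : μ (J '' N₂) = 0 :=
    addHaar_image_eq_zero_of_det_fderivWithin_eq_zero μ
      (fun y hy => hy.1.hasFDerivAt.hasFDerivWithinAt) fun y hy => hy.2
  filter_upwards [measure_eq_zero_iff_ae_notMem.mp hN₁, measure_eq_zero_iff_ae_notMem.mp hN₂]
    with x hx₁ hx₂
  have hdiff : DifferentiableAt ℝ J ((1 + 2 * c) • x + P x) := by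
    by_contra h
    exact hx₁ ⟨_, h, hJ x _ (hP x)⟩
  exact ⟨P x, hasSecondOrderExpansion_of_resolvent hc (IsSemiconvex.continuous fun y => ⟨_, hP y⟩)
    hP hJ hdiff.hasFDerivAt fun hdet => hx₂ ⟨_, ⟨hdiff, hdet⟩, hJ x _ (hP x)⟩⟩

end Semiconvex

/-! ### Jensen's lemma and the theorem on sums -/

section Supergradient

variable {E : Type*} [NormedAddCommGroup E] [InnerProductSpace ℝ E]
  {c k : ℝ} {f g u : E → ℝ} {K : Set E} {x y p q : E}

/-- `p` is the slope of an affine function touching `f` from above at `x`, with a global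
inequality. -/
def IsSupergradient (f : E → ℝ) (x p : E) : Prop :=
  ∀ y, f y ≤ f x + ⟪p, y - x⟫

lemma norm_le_of_inner_le {a : E} {r : ℝ} (hc : 0 < c) (hr : 0 ≤ r)
    (h : ∀ v, ⟪a, v⟫ ≤ c * (‖v‖ ^ 2 + r ^ 2)) : ‖a‖ ≤ 2 * c * r := by
  have hv := h ((2 * c)⁻¹ • a)
  rw [real_inner_smul_right, real_inner_self_eq_norm_sq, norm_smul,
    Real.norm_of_nonneg (by positivity)] at hv
  have hcomplete : (2 * c)⁻¹ * ‖a‖ ^ 2 = 2 * (c * ((2 * c)⁻¹ * ‖a‖) ^ 2) := by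
    field_simp
  have hsq : ((2 * c)⁻¹ * ‖a‖) ^ 2 ≤ r ^ 2 := le_of_mul_le_mul_left (by linarith) hc
  have hle := le_of_sq_le_sq hsq hr
  rwa [inv_mul_le_iff₀ (by positivity)] at hle

lemma IsProximalSubgradient.eq_of_isSupergradient (hp : IsProximalSubgradient c f x p)
    (hc : 0 < c) (hq : IsSupergradient f x q) : p = q := by
  have h := norm_le_of_inner_le (a := p - q) hc le_rfl fun v => by
    have hpv := hp (x + v)
    have hqv := hq (x + v)
    rw [add_sub_cancel_left] at hpv hqv
    rw [inner_sub_left]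
    linarith
  rwa [mul_zero, norm_le_zero_iff, sub_eq_zero] at h

-- Compare at `y + v` the paraboloid below the graph at `x` with the affine function above it at
-- `y`.
lemma IsSemiconvex.norm_sub_le_of_isSupergradient (hf : IsSemiconvex c f) (hc : 0 < c)
    (hp : IsSupergradient f x p) (hq : IsSupergradient f y q) :
    ‖p - q‖ ≤ 2 * (2 * c) * ‖x - y‖ := by
  obtain ⟨p', hp'⟩ := hf x
  obtain rfl := hp'.eq_of_isSupergradient hc hp
  refine norm_le_of_inner_le (by positivity) (norm_nonneg _) fun v => ?_
  have hbelow := hp' (y + v)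
  have habove := hq (y + v)
  have hyx := hp y
  have hparallelogram := parallelogram_law_with_norm ℝ v (x - y)
  rw [add_sub_cancel_left] at habove
  rw [show y + v - x = v - (x - y) by abel, inner_sub_right] at hbelow
  rw [← neg_sub x y, inner_neg_right] at hyx
  rw [inner_sub_left]
  nlinarith [mul_nonneg hc.le (mul_self_nonneg ‖v + (x - y)‖)]

lemma HasSecondOrderExpansion.add {a b : E} {A B : E →L[ℝ] E}
    (hf : HasSecondOrderExpansion f a A x) (hg : HasSecondOrderExpansion g b B x) :
    HasSecondOrderExpansion (fun z => f z + g z) (a + b) (A + B) x := by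
  refine (IsLittleO.add hf hg).congr_left fun z => ?_
  simp only [quadPoly, add_apply, inner_add_left]
  ring

lemma HasSecondOrderExpansion.eventually_le {a : E} {A : E →L[ℝ] E} {η : ℝ}
    (hf : HasSecondOrderExpansion f a A x) (hη : 0 < η) :
    ∀ᶠ z in 𝓝 x, |f z - f x - quadPoly a A x z| ≤ η * ‖z - x‖ ^ 2 := by
  filter_upwards [isLittleO_iff.mp hf hη] with z hz
  simpa using hz

lemma IsSupergradient.eventually_ray_le {a : E} {A : E →L[ℝ] E} {η : ℝ}
    (hp : IsSupergradient f x p) (hf : HasSecondOrderExpansion f a A x) (hη : 0 < η) (v : E) :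
    ∀ᶠ s in 𝓝[>] (0 : ℝ), ⟪a - p, v⟫ ≤ s * (η * ‖v‖ ^ 2 - 2⁻¹ * ⟪A v, v⟫) := by
  have hline : Tendsto (fun s : ℝ => x + s • v) (𝓝[>] 0) (𝓝 x) :=
    tendsto_nhdsWithin_of_tendsto_nhds (Continuous.tendsto' (by fun_prop) _ _ (by simp))
  filter_upwards [hline.eventually (hf.eventually_le hη), self_mem_nhdsWithin] with s hs hspos
  have hps := hp (x + s • v)
  have hfs := (abs_le.mp hs).1
  rw [quadPoly] at hfs
  simp only [add_sub_cancel_left, map_smul, real_inner_smul_left, real_inner_smul_right,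
    norm_smul, mul_pow, Real.norm_eq_abs, sq_abs] at hps hfs
  rw [inner_sub_left]
  refine le_of_mul_le_mul_left ?_ (mem_Ioi.mp hspos)
  linarith

lemma IsSupergradient.eq_of_hasSecondOrderExpansion {a : E} {A : E →L[ℝ] E}
    (hp : IsSupergradient f x p) (hf : HasSecondOrderExpansion f a A x) : a = p := by
  have hlim : Tendsto (fun s : ℝ => s * (1 * ‖a - p‖ ^ 2 - 2⁻¹ * ⟪A (a - p), a - p⟫)) (𝓝[>] 0)
      (𝓝 0) :=
    tendsto_nhdsWithin_of_tendsto_nhds (Continuous.tendsto' (by fun_prop) _ _ (zero_mul _))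
  have hle := ge_of_tendsto hlim (hp.eventually_ray_le hf one_pos (a - p))
  rwa [real_inner_self_eq_norm_sq, sq_nonpos_iff, norm_eq_zero, sub_eq_zero] at hle

lemma IsSupergradient.inner_nonpos {A : E →L[ℝ] E}
    (hp : IsSupergradient f x p) (hf : HasSecondOrderExpansion f p A x) (v : E) :
    ⟪A v, v⟫ ≤ 0 := by
  have hlim : Tendsto (fun η => 2 * (η * ‖v‖ ^ 2)) (𝓝[>] 0) (𝓝 0) :=
    tendsto_nhdsWithin_of_tendsto_nhds (Continuous.tendsto' (by fun_prop) _ _ (by simp))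
  refine ge_of_tendsto hlim ?_
  filter_upwards [self_mem_nhdsWithin] with η hη
  obtain ⟨s, hs, hspos⟩ := ((hp.eventually_ray_le hf hη v).and self_mem_nhdsWithin).exists
  rw [sub_self, inner_zero_left] at hs
  linarith [nonneg_of_mul_nonneg_right hs (mem_Ioi.mp hspos)]

lemma exists_isSupergradient [FiniteDimensional ℝ E] {a b : ℝ} (hf : Continuous f) (hb : 0 < b)
    (hle : ∀ z, f z ≤ a - b * ‖z‖ ^ 2) (p : E) : ∃ x, IsSupergradient f x p := by
  have hcoercive : Tendsto (fun z => ⟪p, z⟫ - f z) (cocompact E) atTop := by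
    have hquad : Tendsto (fun t : ℝ => t * (b * t - ‖p‖) - a) atTop atTop :=
      tendsto_atTop_add_const_right _ _ <| tendsto_id.atTop_mul_atTop₀ <|
        tendsto_atTop_add_const_right _ _ (tendsto_id.const_mul_atTop hb)
    refine tendsto_atTop_mono (fun z => ?_) (hquad.comp (tendsto_norm_cocompact_atTop (E := E)))
    have hinner := (abs_le.mp (abs_real_inner_le_norm p z)).1
    simp only [Function.comp_apply]
    linarith [hle z]
  obtain ⟨x, hx⟩ := Continuous.exists_forall_le (by fun_prop) hcoercive
  refine ⟨x, fun y => ?_⟩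
  rw [inner_sub_right]
  linarith [hx y]

section Jensen

variable [FiniteDimensional ℝ E] [MeasurableSpace E] [BorelSpace E]

-- The supergradients of slope at most `δ` fill a ball, while a Lipschitz map takes their contact
-- points to them.
theorem jensen (μ : Measure E) [μ.IsAddHaarMeasure] {δ : ℝ} {N : Set E} (hc : 0 < c)
    (hδ : 0 < δ) (hf : IsSemiconvex c f) (hex : ∀ p, ‖p‖ ≤ δ → ∃ x, IsSupergradient f x p)
    (hN : μ N = 0) : ∃ x ∉ N, ∃ p, ‖p‖ ≤ δ ∧ IsSupergradient f x p := by
  by_contra! hcon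
  choose! X hX using hex
  have hmem : ∀ p, ‖p‖ ≤ δ → X p ∈ N := fun p hp => by_contra fun h => hcon _ h p hp (hX p hp)
  have hinj : InjOn X (closedBall 0 δ) := fun p hp q hq hpq => by
    have h := hf.norm_sub_le_of_isSupergradient hc (hX p (mem_closedBall_zero_iff.mp hp))
      (hX q (mem_closedBall_zero_iff.mp hq))
    rwa [hpq, sub_self, norm_zero, mul_zero, norm_le_zero_iff, sub_eq_zero] at h
  let slope := Function.invFunOn X (closedBall 0 δ)
  have hslope : ∀ p ∈ closedBall 0 δ, slope (X p) = p := hinj.leftInvOn_invFunOn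
  have hlip : LipschitzOnWith ⟨2 * (2 * c), by positivity⟩ slope (X '' closedBall 0 δ) := by
    refine LipschitzOnWith.of_dist_le_mul ?_
    rintro _ ⟨p, hp, rfl⟩ _ ⟨q, hq, rfl⟩
    rw [hslope p hp, hslope q hq, dist_eq_norm, dist_eq_norm]
    exact hf.norm_sub_le_of_isSupergradient hc (hX p (mem_closedBall_zero_iff.mp hp))
      (hX q (mem_closedBall_zero_iff.mp hq))
  have hzero := addHaar_image_eq_zero_of_lipschitzOnWith μ hlip <| measure_mono_null
    (image_subset_iff.mpr fun p hp => hmem p (mem_closedBall_zero_iff.mp hp)) hN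
  rw [image_image, image_congr hslope, image_id'] at hzero
  exact (measure_closedBall_pos μ 0 hδ).ne' hzero

end Jensen

end Supergradient

section SupConvolution

variable {E : Type*} [NormedAddCommGroup E] {u : E → ℝ} {k : ℝ} {K : Set E} {x y : E}

/-- The sup-convolution of a function `u` on `K` with penalty `k ‖·‖²`; the `supConv Ω u ε` above
is the case of `closure Ω` and `1 / (2 ε)`. -/
def supConvolution (u : E → ℝ) (k : ℝ) (K : Set E) (x : E) : ℝ :=
  sSup ((fun z => u z - k * ‖x - z‖ ^ 2) '' K)

lemma le_supConvolution (hK : IsCompact K) (hu : ContinuousOn u K) (x : E) (hy : y ∈ K) :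
    u y - k * ‖x - y‖ ^ 2 ≤ supConvolution u k K x :=
  le_csSup (hK.bddAbove_image (hu.sub (by fun_prop))) (mem_image_of_mem _ hy)

lemma exists_eq_supConvolution (hK : IsCompact K) (hne : K.Nonempty) (hu : ContinuousOn u K)
    (k : ℝ) (x : E) : ∃ y ∈ K, supConvolution u k K x = u y - k * ‖x - y‖ ^ 2 :=
  hK.exists_sSup_image_eq hne (hu.sub (by fun_prop))

lemma supConvolution_le {R D : ℝ} (hK : IsCompact K) (hne : K.Nonempty) (hu : ContinuousOn u K)
    (hk : 0 ≤ k) (hR : ∀ z ∈ K, u z ≤ R) (hD : ∀ z ∈ K, ‖z‖ ≤ D) (x : E) :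
    supConvolution u k K x ≤ R + k * D ^ 2 - k / 2 * ‖x‖ ^ 2 := by
  obtain ⟨y, hy, hxy⟩ := exists_eq_supConvolution hK hne hu k x
  have hsq : ‖x‖ ^ 2 ≤ 2 * (‖x - y‖ ^ 2 + D ^ 2) :=
    calc ‖x‖ ^ 2 ≤ (‖x - y‖ + D) ^ 2 := by
          gcongr
          linarith [norm_le_norm_sub_add x y, hD y hy]
      _ ≤ 2 * (‖x - y‖ ^ 2 + D ^ 2) := add_sq_le
  linarith [hR y hy, mul_le_mul_of_nonneg_left hsq hk]

lemma exists_bound_abs_and_norm {w : E → ℝ} (hK : IsCompact K) (hu : ContinuousOn u K)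
    (hw : ContinuousOn w K) :
    ∃ R D, 0 ≤ R ∧ 0 ≤ D ∧ ∀ z ∈ K, |u z| ≤ R ∧ |w z| ≤ R ∧ ‖z‖ ≤ D := by
  obtain ⟨R, hR⟩ := hK.exists_bound_of_continuousOn (hu.prodMk hw)
  obtain ⟨D, hD⟩ := isBounded_iff_forall_norm_le.mp hK.isBounded
  exact ⟨max R 0, max D 0, le_max_right _ _, le_max_right _ _, fun z hz =>
    ⟨le_max_of_le_left ((norm_fst_le _).trans (hR z hz)),
      le_max_of_le_left ((norm_snd_le _).trans (hR z hz)), le_max_of_le_left (hD z hz)⟩⟩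

variable [InnerProductSpace ℝ E]

lemma isSemiconvex_supConvolution (hK : IsCompact K) (hne : K.Nonempty) (hu : ContinuousOn u K)
    (k : ℝ) : IsSemiconvex k (supConvolution u k K) := by
  intro x
  obtain ⟨y, hy, hxy⟩ := exists_eq_supConvolution hK hne hu k x
  refine ⟨(2 * k) • (y - x), fun z => ?_⟩
  have hz := le_supConvolution (k := k) hK hu z hy
  rw [← sub_add_sub_cancel z x y, norm_add_sq_real, ← neg_sub y x, inner_neg_right, norm_neg] at hz
  rw [hxy, real_inner_smul_left, ← norm_neg (x - y), neg_sub, real_inner_comm]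
  linarith

lemma eventually_le_of_hasSecondOrderExpansion_supConvolution {a : E} {A : E →L[ℝ] E} {η : ℝ}
    (hK : IsCompact K) (hu : ContinuousOn u K)
    (hxy : supConvolution u k K x = u y - k * ‖x - y‖ ^ 2)
    (hA : HasSecondOrderExpansion (supConvolution u k K) a A x) (hη : 0 < η) :
    ∀ᶠ z in 𝓝[K] y,
      u z ≤ u y + quadPoly a (A + (2 * η) • ContinuousLinearMap.id ℝ E) y z := by
  have hshift : Tendsto (fun z => x + (z - y)) (𝓝[K] y) (𝓝 x) :=
    tendsto_nhdsWithin_of_tendsto_nhds (Continuous.tendsto' (by fun_prop) _ _ (by simp))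
  filter_upwards [hshift.eventually (hA.eventually_le hη), self_mem_nhdsWithin] with z hz hzK
  have hle := le_supConvolution (k := k) hK hu (x + (z - y)) hzK
  have hupper := (abs_le.mp hz).2
  rw [show x + (z - y) - z = x - y by abel] at hle
  simp only [quadPoly, add_sub_cancel_left, add_apply, FunLike.coe_smul,
    Pi.smul_apply, ContinuousLinearMap.id_apply, inner_add_left, real_inner_smul_left,
    real_inner_self_eq_norm_sq] at hupper ⊢
  linarith

lemma add_le_of_isSupergradient_supConvolution {w : E → ℝ} {δ : ℝ} {y' z p : E} (hK : IsCompact K)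
    (hu : ContinuousOn u K) (hw : ContinuousOn w K)
    (hp : IsSupergradient (fun z => supConvolution u k K z + supConvolution w k K z) x p)
    (hpδ : ‖p‖ ≤ δ) (hy : supConvolution u k K x = u y - k * ‖x - y‖ ^ 2)
    (hy' : supConvolution w k K x = w y' - k * ‖x - y'‖ ^ 2) (hz : z ∈ K) :
    u z + w z + k * (‖x - y‖ ^ 2 + ‖x - y'‖ ^ 2) ≤ u y + w y' + δ * ‖z - x‖ := by
  have huz := le_supConvolution (k := k) hK hu z hz
  have hwz := le_supConvolution (k := k) hK hw z hz
  have hpz := hp z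
  have hinner : ⟪p, z - x⟫ ≤ δ * ‖z - x‖ := (real_inner_le_norm _ _).trans (by gcongr)
  simp only [hy, hy'] at hpz
  rw [sub_self, norm_zero, zero_pow two_ne_zero, mul_zero, sub_zero] at huz hwz
  linarith

end SupConvolution

section TheoremOnSums

variable {E : Type*} [NormedAddCommGroup E] [InnerProductSpace ℝ E] [FiniteDimensional ℝ E]
  {c : ℝ} {f g u w : E → ℝ} {K : Set E}

lemma exists_isSupergradient_hasSecondOrderExpansion {C b δ : ℝ} (hc : 0 < c)
    (hf : IsSemiconvex c f) (hg : IsSemiconvex c g) (hb : 0 < b)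
    (hfg : ∀ z, f z + g z ≤ C - b * ‖z‖ ^ 2) (hδ : 0 < δ) :
    ∃ (x p q : E) (A B : E →L[ℝ] E), HasSecondOrderExpansion f p A x ∧
      HasSecondOrderExpansion g q B x ∧ ‖p + q‖ ≤ δ ∧
      IsSupergradient (fun z => f z + g z) x (p + q) ∧ ∀ v, ⟪A v, v⟫ + ⟪B v, v⟫ ≤ 0 := by
  borelize E
  let μ : Measure E := Measure.addHaar
  have hsum : IsSemiconvex (2 * c) fun z => f z + g z := fun x => by
    obtain ⟨p, hp⟩ := hf x
    obtain ⟨q, hq⟩ := hg x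
    refine ⟨p + q, fun y => ?_⟩
    rw [inner_add_left]
    linarith [hp y, hq y]
  have hnull : μ {x | ¬ ((∃ p A, HasSecondOrderExpansion f p A x) ∧
      ∃ q B, HasSecondOrderExpansion g q B x)} = 0 :=
    (alexandrov μ hc.le hf).and (alexandrov μ hc.le hg)
  obtain ⟨x, hx, p, hpδ, hp⟩ := jensen μ (by positivity) hδ hsum
    (fun p _ => exists_isSupergradient hsum.continuous hb hfg p) hnull
  obtain ⟨⟨a, A, hA⟩, a', B, hB⟩ := not_not.mp hx
  obtain rfl := hp.eq_of_hasSecondOrderExpansion (hA.add hB)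
  refine ⟨x, a, a', A, B, hA, hB, hpδ, hp, fun v => ?_⟩
  have hv := hp.inner_nonpos (hA.add hB) v
  rwa [add_apply, inner_add_left] at hv

lemma exists_touching_of_penalty {k δ η : ℝ} (hK : IsCompact K) (hne : K.Nonempty)
    (hu : ContinuousOn u K) (hw : ContinuousOn w K) (hk : 0 < k) (hδ : 0 < δ) (hη : 0 < η) :
    ∃ x, ∃ y ∈ K, ∃ y' ∈ K, ∃ (q q' : E) (S S' : E →L[ℝ] E),
      (∀ z ∈ K, u z + w z + k * (‖x - y‖ ^ 2 + ‖x - y'‖ ^ 2) ≤ u y + w y' + δ * ‖z - x‖) ∧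
      ‖q + q'‖ ≤ δ ∧ (∀ v, ⟪S v, v⟫ + ⟪S' v, v⟫ ≤ 4 * η * ‖v‖ ^ 2) ∧
      (∀ᶠ z in 𝓝[K] y, u z ≤ u y + quadPoly q S y z) ∧
      ∀ᶠ z in 𝓝[K] y', w z ≤ w y' + quadPoly q' S' y' z := by
  obtain ⟨R, D, -, -, hRD⟩ := exists_bound_abs_and_norm hK hu hw
  have hdecay : ∀ z, supConvolution u k K z + supConvolution w k K z ≤
      2 * (R + k * D ^ 2) - k * ‖z‖ ^ 2 := fun z => by
    linarith [supConvolution_le hK hne hu hk.le (fun z hz => (abs_le.mp (hRD z hz).1).2)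
        (fun z hz => (hRD z hz).2.2) z,
      supConvolution_le hK hne hw hk.le (fun z hz => (abs_le.mp (hRD z hz).2.1).2)
        (fun z hz => (hRD z hz).2.2) z]
  obtain ⟨x, q, q', A, B, hA, hB, hqδ, hsuper, hAB⟩ :=
    exists_isSupergradient_hasSecondOrderExpansion hk (isSemiconvex_supConvolution hK hne hu k)
      (isSemiconvex_supConvolution hK hne hw k) hk hdecay hδ
  obtain ⟨y, hy, hxy⟩ := exists_eq_supConvolution hK hne hu k x
  obtain ⟨y', hy', hxy'⟩ := exists_eq_supConvolution hK hne hw k x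
  refine ⟨x, y, hy, y', hy', q, q', _, _,
    fun z => add_le_of_isSupergradient_supConvolution hK hu hw hsuper hqδ hxy hxy', hqδ,
    fun v => ?_, eventually_le_of_hasSecondOrderExpansion_supConvolution hK hu hxy hA hη,
    eventually_le_of_hasSecondOrderExpansion_supConvolution hK hw hxy' hB hη⟩
  simp only [add_apply, FunLike.coe_smul, Pi.smul_apply, ContinuousLinearMap.id_apply,
    inner_add_left, real_inner_smul_left, real_inner_self_eq_norm_sq]
  linarith [hAB v]

lemma lt_and_lt_of_penalty_le {R ρ s t : ℝ} (hR : 0 ≤ R) (hρ : 0 < ρ)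
    (h : (1 + (R + 2) / ρ ^ 2) * (s ^ 2 + t ^ 2) ≤ R + s) : s < ρ ∧ t < ρ := by
  have hsq : s ^ 2 + t ^ 2 < ρ ^ 2 := by
    refine lt_of_mul_lt_mul_left (a := (R + 2) / ρ ^ 2) ?_ (by positivity)
    rw [div_mul_cancel₀ _ (by positivity)]
    nlinarith [sq_nonneg (s - 1)]
  constructor
  · exact lt_of_pow_lt_pow_left₀ 2 hρ.le (by linarith [sq_nonneg t])
  · exact lt_of_pow_lt_pow_left₀ 2 hρ.le (by linarith [sq_nonneg s])

-- A compactly supported form of the Jensen-Ishii lemma.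
theorem exists_touching_of_add {ε : ℝ} (hK : IsCompact K) (hne : K.Nonempty)
    (hu : ContinuousOn u K) (hw : ContinuousOn w K) (hε : 0 < ε) :
    ∃ y ∈ K, ∃ y' ∈ K, ∃ (q q' : E) (S S' : E →L[ℝ] E), ‖y - y'‖ < ε ∧
      (∀ z ∈ K, u z + w z ≤ u y + w y' + ε) ∧ ‖q + q'‖ ≤ ε ∧
      (∀ v, ⟪S v, v⟫ + ⟪S' v, v⟫ ≤ ε * ‖v‖ ^ 2) ∧
      (∀ᶠ z in 𝓝[K] y, u z ≤ u y + quadPoly q S y z) ∧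
      ∀ᶠ z in 𝓝[K] y', w z ≤ w y' + quadPoly q' S' y' z := by
  obtain ⟨R, D, hR, hD, hRD⟩ := exists_bound_abs_and_norm hK hu hw
  set ρ := min (ε / 2) 1
  set k := 1 + (2 * R + 2) / ρ ^ 2
  set δ := min 1 (ε / (2 * D + 1))
  have hρ : 0 < ρ := by positivity
  have hk : 0 < k := by positivity
  have hδ : 0 < δ := by positivity
  obtain ⟨x, y, hy, y', hy', q, q', S, S', hsum, hqδ, hS, htouch⟩ :=
    exists_touching_of_penalty hK hne hu hw hk hδ (by positivity : 0 < ε / 4)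
  obtain ⟨hyρ, hy'ρ⟩ : ‖x - y‖ < ρ ∧ ‖x - y'‖ < ρ := by
    refine lt_and_lt_of_penalty_le (R := 2 * R) (by positivity) hρ ?_
    have hδs : δ * ‖y - x‖ ≤ ‖x - y‖ := by
      rw [norm_sub_rev]
      exact mul_le_of_le_one_left (norm_nonneg _) (min_le_left _ _)
    linarith [hsum y hy, abs_le.mp (hRD y hy).2.1, abs_le.mp (hRD y' hy').2.1]
  refine ⟨y, hy, y', hy', q, q', S, S', ?_, fun z hz => ?_, hqδ.trans ?_, fun v => ?_, htouch⟩
  · calc ‖y - y'‖ ≤ ‖x - y‖ + ‖x - y'‖ := norm_sub_rev y x ▸ norm_sub_le_norm_sub_add_norm_sub ..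
      _ < ε / 2 + ε / 2 :=
        add_lt_add (hyρ.trans_le (min_le_left _ _)) (hy'ρ.trans_le (min_le_left _ _))
      _ = ε := add_halves ε
  · have hzx : ‖z - x‖ ≤ 2 * D + 1 := by
      linarith [norm_sub_le_norm_sub_add_norm_sub z y x, norm_sub_le z y, norm_sub_rev x y,
        (hRD z hz).2.2, (hRD y hy).2.2, hyρ, min_le_right (ε / 2) 1]
    have hδε : δ * ‖z - x‖ ≤ ε :=
      calc δ * ‖z - x‖ ≤ ε / (2 * D + 1) * (2 * D + 1) := by
            gcongr
            exact min_le_right _ _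
        _ = ε := div_mul_cancel₀ _ (by positivity)
    have : 0 ≤ k * (‖x - y‖ ^ 2 + ‖x - y'‖ ^ 2) := by positivity
    linarith [hsum z hz]
  · exact (min_le_right _ _).trans (div_le_self hε.le (by linarith))
  · exact (hS v).trans_eq (by ring)

end TheoremOnSums

/-! ### Gradients, Hessians and Pucci operators -/

section Calculus

variable {d : ℕ} {φ ψ : Eucl d → ℝ}

lemma gradAt_apply (φ : Eucl d → ℝ) (x : Eucl d) (i : Fin d) :
    gradAt φ x i = fderiv ℝ φ x (EuclideanSpace.single i 1) := rfl

lemma gradAt_eq_gradient (φ : Eucl d → ℝ) (x : Eucl d) : gradAt φ x = gradient φ x := by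
  ext i
  rw [gradAt_apply, ← inner_gradient_left, EuclideanSpace.inner_single_right]
  simp

lemma inner_gradAt (φ : Eucl d → ℝ) (x v : Eucl d) : ⟪gradAt φ x, v⟫ = fderiv ℝ φ x v := by
  rw [gradAt_eq_gradient, inner_gradient_left]

lemma gradAt_eq_of_hasFDerivAt {x p : Eucl d} (h : HasFDerivAt φ (innerSL ℝ p) x) :
    gradAt φ x = p :=
  ext_inner_right ℝ fun v => by rw [inner_gradAt, h.fderiv, innerSL_apply_apply]

lemma quadForm_of_apply_single (B : Eucl d →L[ℝ] Eucl d →L[ℝ] ℝ) (v : Eucl d) :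
    quadForm (Matrix.of fun i j => B (EuclideanSpace.single i 1) (EuclideanSpace.single j 1)) v
      = B v v := by
  have hsum : ∑ i, v i • (EuclideanSpace.single i (1 : ℝ) : Eucl d) = v := by
    ext j
    simp [Pi.single_apply]
  conv_rhs => rw [← hsum]
  simp only [map_sum, map_smul, sum_apply, smul_apply, smul_eq_mul, Finset.mul_sum]
  rw [Finset.sum_comm]
  exact Finset.sum_congr rfl fun i _ => Finset.sum_congr rfl fun j _ => by
    rw [Matrix.of_apply]; ring

lemma quadForm_add (M N : Matrix (Fin d) (Fin d) ℝ) (v : Eucl d) :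
    quadForm (M + N) v = quadForm M v + quadForm N v := by
  simp only [quadForm, Matrix.add_apply, add_mul, Finset.sum_add_distrib]

lemma quadForm_smul (a : ℝ) (M : Matrix (Fin d) (Fin d) ℝ) (v : Eucl d) :
    quadForm (a • M) v = a * quadForm M v := by
  simp only [quadForm, Matrix.smul_apply, smul_eq_mul, Finset.mul_sum, mul_assoc]

lemma quadForm_neg (M : Matrix (Fin d) (Fin d) ℝ) (v : Eucl d) :
    quadForm (-M) v = -quadForm M v := by
  rw [← neg_one_smul ℝ, quadForm_smul, neg_one_mul]

lemma quadForm_sub (M N : Matrix (Fin d) (Fin d) ℝ) (v : Eucl d) :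
    quadForm (M - N) v = quadForm M v - quadForm N v := by
  rw [sub_eq_add_neg, quadForm_add, quadForm_neg, sub_eq_add_neg]

lemma quadForm_vecMulVec_self (p v : Eucl d) : quadForm (Matrix.vecMulVec p p) v = ⟪p, v⟫ ^ 2 := by
  simp only [quadForm, Matrix.vecMulVec_apply, PiLp.inner_apply, sq, Finset.sum_mul_sum]
  exact Finset.sum_congr rfl fun i _ => Finset.sum_congr rfl fun j _ => by simp; ring

lemma differentiable_fderiv_of_contDiff_two (hφ : ContDiff ℝ 2 φ) :
    Differentiable ℝ (fderiv ℝ φ) :=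
  (hφ.fderiv_right (m := 1) (by norm_num)).differentiable (by norm_num)

lemma continuous_fderiv_fderiv (hφ : ContDiff ℝ 2 φ) : Continuous (fderiv ℝ (fderiv ℝ φ)) :=
  (hφ.fderiv_right (m := 1) (by norm_num)).continuous_fderiv (by norm_num)

lemma hessAt_eq_fderiv_fderiv (hφ : ContDiff ℝ 2 φ) (x : Eucl d) :
    hessAt φ x = Matrix.of fun i j =>
      fderiv ℝ (fderiv ℝ φ) x (EuclideanSpace.single i 1) (EuclideanSpace.single j 1) := by
  ext i j
  simp only [hessAt, Matrix.of_apply]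
  rw [fderiv_clm_apply (differentiable_fderiv_of_contDiff_two hφ x) (differentiableAt_const _)]
  simp

lemma hessAt_isSymm (hφ : ContDiff ℝ 2 φ) (x : Eucl d) : (hessAt φ x).IsSymm := by
  rw [hessAt_eq_fderiv_fderiv hφ]
  ext i j
  simp only [Matrix.transpose_apply, Matrix.of_apply]
  exact hφ.contDiffAt.isSymmSndFDerivAt (by simp) _ _

lemma quadForm_hessAt (hφ : ContDiff ℝ 2 φ) (x v : Eucl d) :
    quadForm (hessAt φ x) v = fderiv ℝ (fderiv ℝ φ) x v v := by
  rw [hessAt_eq_fderiv_fderiv hφ, quadForm_of_apply_single]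

lemma abs_quadForm_hessAt_le (hφ : ContDiff ℝ 2 φ) (x v : Eucl d) :
    |quadForm (hessAt φ x) v| ≤ ‖fderiv ℝ (fderiv ℝ φ) x‖ * ‖v‖ ^ 2 := by
  rw [quadForm_hessAt hφ, ← Real.norm_eq_abs, sq, ← mul_assoc]
  exact (fderiv ℝ (fderiv ℝ φ) x).le_opNorm₂ v v

lemma continuous_gradAt (hφ : ContDiff ℝ 2 φ) : Continuous (gradAt φ) :=
  (EuclideanSpace.equiv (Fin d) ℝ).symm.continuous.comp (continuous_pi fun _ =>
    (hφ.continuous_fderiv (by norm_num)).clm_apply continuous_const)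

lemma continuous_hessAt (hφ : ContDiff ℝ 2 φ) : Continuous (hessAt φ) := by
  rw [funext (hessAt_eq_fderiv_fderiv hφ)]
  exact continuous_matrix fun i j =>
    ((continuous_fderiv_fderiv hφ).clm_apply continuous_const).clm_apply continuous_const

lemma gradAt_neg (φ : Eucl d → ℝ) (x : Eucl d) : gradAt (fun y => -φ y) x = -gradAt φ x := by
  ext i
  rw [PiLp.neg_apply, gradAt_apply, gradAt_apply, fderiv_fun_neg, neg_apply]

lemma hessAt_neg (φ : Eucl d → ℝ) (x : Eucl d) : hessAt (fun y => -φ y) x = -hessAt φ x := by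
  ext i j
  simp only [hessAt, Matrix.of_apply, Matrix.neg_apply, fderiv_fun_neg, neg_apply]

lemma gradAt_add {x : Eucl d} (hφ : DifferentiableAt ℝ φ x) (hψ : DifferentiableAt ℝ ψ x) :
    gradAt (fun y => φ y + ψ y) x = gradAt φ x + gradAt ψ x := by
  ext i
  rw [PiLp.add_apply, gradAt_apply, gradAt_apply, gradAt_apply, fderiv_fun_add hφ hψ, add_apply]

lemma hessAt_add (hφ : ContDiff ℝ 2 φ) (hψ : ContDiff ℝ 2 ψ) (x : Eucl d) :
    hessAt (fun y => φ y + ψ y) x = hessAt φ x + hessAt ψ x := by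
  have hfderiv : fderiv ℝ (fun y => φ y + ψ y) = fun y => fderiv ℝ φ y + fderiv ℝ ψ y :=
    funext fun y =>
      fderiv_fun_add (hφ.differentiable (by norm_num) y) (hψ.differentiable (by norm_num) y)
  ext i j
  rw [hessAt_eq_fderiv_fderiv (hφ.add hψ), hessAt_eq_fderiv_fderiv hφ, hessAt_eq_fderiv_fderiv hψ,
    hfderiv, fderiv_fun_add (differentiable_fderiv_of_contDiff_two hφ x)
      (differentiable_fderiv_of_contDiff_two hψ x)]
  rfl

lemma gradAt_comp_sub (φ : Eucl d → ℝ) (e x : Eucl d) :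
    gradAt (fun y => φ (y - e)) x = gradAt φ (x - e) := by
  ext i
  rw [gradAt_apply, gradAt_apply, fderiv_comp_sub]

lemma hessAt_comp_sub (φ : Eucl d → ℝ) (e x : Eucl d) :
    hessAt (fun y => φ (y - e)) x = hessAt φ (x - e) := by
  ext i j
  simp only [hessAt, Matrix.of_apply, fderiv_comp_sub]
  rw [fderiv_comp_sub (f := fun y => fderiv ℝ φ y (EuclideanSpace.single j 1))]

lemma gradAt_const (c : ℝ) (x : Eucl d) : gradAt (fun _ => c) x = 0 := by
  ext i
  simp [gradAt_apply]

lemma hessAt_const (c : ℝ) (x : Eucl d) : hessAt (fun _ => c) x = 0 := by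
  ext i j
  simp [hessAt]

lemma gradAt_comp {g : ℝ → ℝ} {x : Eucl d} (hg : DifferentiableAt ℝ g (φ x))
    (hφ : DifferentiableAt ℝ φ x) :
    gradAt (fun y => g (φ y)) x = deriv g (φ x) • gradAt φ x := by
  have hfderiv : fderiv ℝ (fun y => g (φ y)) x = deriv g (φ x) • fderiv ℝ φ x :=
    (hg.hasDerivAt.comp_hasFDerivAt x hφ.hasFDerivAt).fderiv
  ext i
  rw [PiLp.smul_apply, gradAt_apply, gradAt_apply, hfderiv, smul_apply]

lemma hessAt_comp {g : ℝ → ℝ} (hg : ContDiff ℝ 2 g) (hφ : ContDiff ℝ 2 φ) (x : Eucl d) :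
    hessAt (fun y => g (φ y)) x = deriv g (φ x) • hessAt φ x
      + deriv (deriv g) (φ x) • Matrix.vecMulVec (gradAt φ x) (gradAt φ x) := by
  have hdφ : Differentiable ℝ φ := hφ.differentiable (by norm_num)
  have hdg : Differentiable ℝ (deriv g) :=
    ((contDiff_succ_iff_deriv (n := 1)).mp hg).2.2.differentiable (by norm_num)
  have hfderiv : fderiv ℝ (fun y => g (φ y)) = fun y => deriv g (φ y) • fderiv ℝ φ y :=
    funext fun y => ((hg.differentiable (by norm_num) _).hasDerivAt.comp_hasFDerivAt y
      (hdφ y).hasFDerivAt).fderiv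
  have hsecond : fderiv ℝ (fderiv ℝ fun y => g (φ y)) x = deriv g (φ x) • fderiv ℝ (fderiv ℝ φ) x
      + (deriv (deriv g) (φ x) • fderiv ℝ φ x).smulRight (fderiv ℝ φ x) := by
    rw [hfderiv]
    exact (((hdg (φ x)).hasDerivAt.comp_hasFDerivAt x (hdφ x).hasFDerivAt).fun_smul
      (differentiable_fderiv_of_contDiff_two hφ x).hasFDerivAt).fderiv
  have hcomp : ContDiff ℝ 2 fun y => g (φ y) := hg.comp hφ
  rw [hessAt_eq_fderiv_fderiv hcomp, hessAt_eq_fderiv_fderiv hφ, hsecond]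
  ext i j
  simp [Matrix.vecMulVec_apply, gradAt_apply, mul_assoc]

lemma norm_pow_four_eq (x₀ : Eucl d) :
    (fun x : Eucl d => ‖x - x₀‖ ^ 4) = fun x => (‖x - x₀‖ ^ 2) ^ 2 :=
  funext fun x => by ring

lemma contDiff_norm_sub_sq (x₀ : Eucl d) : ContDiff ℝ 2 fun x : Eucl d => ‖x - x₀‖ ^ 2 :=
  (contDiff_id.sub contDiff_const).norm_sq ℝ

lemma contDiff_norm_sub_pow_four (x₀ : Eucl d) : ContDiff ℝ 2 fun x : Eucl d => ‖x - x₀‖ ^ 4 := by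
  rw [norm_pow_four_eq]
  exact (contDiff_norm_sub_sq x₀).pow 2

lemma gradAt_norm_sub_pow_four (x₀ : Eucl d) : gradAt (fun x => ‖x - x₀‖ ^ 4) x₀ = 0 := by
  rw [norm_pow_four_eq, gradAt_comp (g := (· ^ 2)) (by fun_prop)
    ((contDiff_norm_sub_sq x₀).differentiable (by norm_num) x₀)]
  simp

lemma hessAt_norm_sub_pow_four (x₀ : Eucl d) : hessAt (fun x => ‖x - x₀‖ ^ 4) x₀ = 0 := by
  have hgrad : gradAt (fun x => ‖x - x₀‖ ^ 2) x₀ = 0 := by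
    have hmin : IsLocalMin (fun x => ‖x - x₀‖ ^ 2) x₀ :=
      Eventually.of_forall fun x => by simp
    ext i
    rw [gradAt_apply, hmin.fderiv_eq_zero]
    rfl
  rw [norm_pow_four_eq, hessAt_comp (g := (· ^ 2)) (by fun_prop) (contDiff_norm_sub_sq x₀), hgrad]
  simp

lemma contDiff_quadPoly (p : Eucl d) (B : Eucl d →L[ℝ] Eucl d) (x : Eucl d) :
    ContDiff ℝ 2 (quadPoly p B x) := by
  have hsub : ContDiff ℝ 2 fun z : Eucl d => z - x := contDiff_id.sub contDiff_const
  exact (contDiff_const.inner ℝ hsub).add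
    (contDiff_const.mul ((B.contDiff.comp hsub).inner ℝ hsub))

lemma hasFDerivAt_quadPoly (p : Eucl d) (B : Eucl d →L[ℝ] Eucl d) (x z : Eucl d) :
    HasFDerivAt (quadPoly p B x)
      (innerSL ℝ (p + (2⁻¹ : ℝ) • (B (z - x) + B.adjoint (z - x)))) z := by
  have hsub : HasFDerivAt (fun y : Eucl d => y - x) (ContinuousLinearMap.id ℝ _) z :=
    (hasFDerivAt_id z).sub_const x
  refine (((hasFDerivAt_const p z).inner ℝ hsub).add
    (((B.hasFDerivAt.comp z hsub).inner ℝ hsub).const_mul 2⁻¹)).congr_fderiv ?_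
  ext v
  simp only [innerSL_apply_apply, inner_add_left, real_inner_smul_left,
    ContinuousLinearMap.adjoint_inner_left]
  simp [fderivInnerCLM_apply, real_inner_comm]

lemma gradAt_quadPoly (p : Eucl d) (B : Eucl d →L[ℝ] Eucl d) (x : Eucl d) :
    gradAt (quadPoly p B x) x = p :=
  gradAt_eq_of_hasFDerivAt (by simpa using hasFDerivAt_quadPoly p B x x)

lemma quadForm_hessAt_quadPoly (p : Eucl d) (B : Eucl d →L[ℝ] Eucl d) (x z v : Eucl d) :
    quadForm (hessAt (quadPoly p B x) z) v = ⟪B v, v⟫ := by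
  set L : Eucl d →L[ℝ] Eucl d := (2⁻¹ : ℝ) • (B + B.adjoint)
  have hfderiv : fderiv ℝ (quadPoly p B x) = fun y => innerSL ℝ (p + L (y - x)) :=
    funext fun y => (hasFDerivAt_quadPoly p B x y).fderiv
  have hsecond : HasFDerivAt (fun y => innerSL ℝ (p + L (y - x))) ((innerSL ℝ).comp L) z :=
    (innerSL ℝ).hasFDerivAt.comp z ((L.hasFDerivAt.comp z (hasFDerivAt_sub_const x)).const_add p)
  rw [quadForm_hessAt (contDiff_quadPoly p B x), hfderiv, hsecond.fderiv]
  simp only [ContinuousLinearMap.comp_apply, innerSL_apply_apply, L, smul_apply, add_apply,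
    real_inner_smul_left, inner_add_left, ContinuousLinearMap.adjoint_inner_left,
    real_inner_comm (B v) v]
  ring

end Calculus

section Pucci

variable {d : ℕ} {M : Matrix (Fin d) (Fin d) ℝ} {lam Lam c : ℝ}

lemma eigs_eq_eigenvalues (hM : M.IsHermitian) : eigs M = hM.eigenvalues := dif_pos hM

lemma eigs_le_of_quadForm_le (hM : M.IsHermitian) (h : ∀ v, quadForm M v ≤ c * ‖v‖ ^ 2)
    (i : Fin d) : eigs M i ≤ c := by
  have hvec := h (hM.eigenvectorBasis i)
  rw [hM.eigenvectorBasis.orthonormal.1 i, one_pow, mul_one] at hvec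
  rw [eigs_eq_eigenvalues hM, hM.eigenvalues_eq]
  refine le_trans (le_of_eq ?_) hvec
  simp only [dotProduct, Matrix.mulVec, quadForm, Finset.mul_sum, Pi.star_apply, star_trivial,
    RCLike.re_to_real]
  exact Finset.sum_congr rfl fun i _ => Finset.sum_congr rfl fun j _ => by ring

lemma trace_eq_posPartTrace_sub_negPartTrace (hM : M.IsHermitian) :
    M.trace = posPartTrace M - negPartTrace M := by
  rw [hM.trace_eq_sum_eigenvalues, posPartTrace, negPartTrace, ← Finset.sum_sub_distrib,
    eigs_eq_eigenvalues hM]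
  exact Finset.sum_congr rfl fun i _ => by
    rw [max_zero_sub_max_neg_zero_eq_self]; rfl

lemma trace_le_of_quadForm_le (h : ∀ v, quadForm M v ≤ c * ‖v‖ ^ 2) : M.trace ≤ d * c := by
  have hdiag : ∀ i, M i i ≤ c := fun i => by
    simpa [quadForm] using h (EuclideanSpace.single i 1)
  calc M.trace ≤ ∑ _i : Fin d, c := Finset.sum_le_sum fun i _ => hdiag i
    _ = d * c := by simp

lemma neg_mul_trace_sub_le_pucciMinus (hlL : lam ≤ Lam) (hc : 0 ≤ c) (hM : M.IsHermitian)
    (h : ∀ v, quadForm M v ≤ c * ‖v‖ ^ 2) :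
    -lam * M.trace - (Lam - lam) * (d * c) ≤ pucciMinus lam Lam M := by
  have hpos : posPartTrace M ≤ d * c :=
    calc posPartTrace M ≤ ∑ _i : Fin d, c :=
          Finset.sum_le_sum fun i _ => max_le (eigs_le_of_quadForm_le hM h i) hc
      _ = d * c := by simp
  have := mul_le_mul_of_nonneg_left hpos (sub_nonneg.mpr hlL)
  rw [pucciMinus, trace_eq_posPartTrace_sub_negPartTrace hM]
  linarith

lemma neg_mul_le_pucciMinus (hlam : 0 ≤ lam) (hlL : lam ≤ Lam) (hc : 0 ≤ c) (hM : M.IsHermitian)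
    (h : ∀ v, quadForm M v ≤ c * ‖v‖ ^ 2) : -(Lam * (d * c)) ≤ pucciMinus lam Lam M := by
  have hmain := neg_mul_trace_sub_le_pucciMinus hlL hc hM h
  have htrace := mul_le_mul_of_nonneg_left (trace_le_of_quadForm_le h) hlam
  linarith

lemma pucciMinus_zero (lam Lam : ℝ) : pucciMinus lam Lam (0 : Matrix (Fin d) (Fin d) ℝ) = 0 := by
  have hzero : eigs (0 : Matrix (Fin d) (Fin d) ℝ) = 0 := by
    rw [eigs_eq_eigenvalues Matrix.isHermitian_zero, Matrix.IsHermitian.eigenvalues_eq_zero_iff]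
  simp [pucciMinus, posPartTrace, negPartTrace, hzero]

end Pucci

/-! ### Comparison of viscosity sub- and supersolutions -/

section Comparison

variable {d : ℕ} {Ω : Set (Eucl d)}
  {F₁ F₂ : Matrix (Fin d) (Fin d) ℝ → Eucl d → ℝ → Eucl d → ℝ} {m : ℝ → ℝ} {κ h : ℝ}
  {u v f g : Eucl d → ℝ}

/-- The structure condition of the theory of viscosity solutions for a pair of operators: at
arguments which are ordered up to an error `c`, the second operator exceeds the first by at most
`m c + κ`. Here `m` is a modulus of continuity and `κ` measures the distance between the two
operators. -/
def StructuredPair (Ω : Set (Eucl d))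
    (F₁ F₂ : Matrix (Fin d) (Fin d) ℝ → Eucl d → ℝ → Eucl d → ℝ) (m : ℝ → ℝ) (κ : ℝ) : Prop :=
  ∀ (M N : Matrix (Fin d) (Fin d) ℝ) (P Q : Eucl d) (r s c : ℝ), ∀ x ∈ Ω, ∀ y ∈ Ω,
    M.IsSymm → N.IsSymm → 0 ≤ c → (∀ w, quadForm (M - N) w ≤ c * ‖w‖ ^ 2) → ‖P - Q‖ ≤ c →
    ‖x - y‖ ≤ c → s ≤ r → F₂ N Q s y - F₁ M P r x ≤ m c + κ

lemma quadPoly_self {E : Type*} [NormedAddCommGroup E] [InnerProductSpace ℝ E] (p : E)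
    (B : E →L[ℝ] E) (x : E) : quadPoly p B x x = 0 := by
  simp [quadPoly]

lemma quadPoly_neg {E : Type*} [NormedAddCommGroup E] [InnerProductSpace ℝ E] (p : E)
    (B : E →L[ℝ] E) (x z : E) : quadPoly (-p) (-B) x z = -quadPoly p B x z := by
  simp only [quadPoly, neg_apply, inner_neg_left]
  ring

lemma mem_of_mem_closure_of_notMem_frontier {X : Type*} [TopologicalSpace X] {s : Set X} {x : X}
    (hs : IsOpen s) (hx : x ∈ closure s) (hfr : x ∉ frontier s) : x ∈ s := by
  by_contra hxs
  exact hfr ⟨hx, by rwa [hs.interior_eq]⟩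

lemma eventually_forall_norm_sub_lt {E : Type*} [NormedAddCommGroup E] {K : Set E} {w : E → ℝ}
    {η : ℝ} (hK : IsCompact K) (hw : ContinuousOn w K) (hη : 0 < η) :
    ∀ᶠ ε in 𝓝[>] (0 : ℝ), ∀ y ∈ K, ∀ y' ∈ K, ‖y - y'‖ < ε → |w y - w y'| < η := by
  obtain ⟨ρ, hρ, hwρ⟩ :=
    Metric.uniformContinuousOn_iff.mp (hK.uniformContinuousOn_of_continuous hw) η hη
  filter_upwards [Ioo_mem_nhdsGT hρ] with ε hε y hy y' hy' hyy'
  exact hwρ y hy y' hy' (by rw [dist_eq_norm]; exact hyy'.trans hε.2)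

lemma StructuredPair.sub_div_le_of_touching {y y' q q' : Eucl d} {S S' : Eucl d →L[ℝ] Eucl d}
    {ε : ℝ} (hF : StructuredPair Ω F₁ F₂ m κ)
    (hsub : ViscSubsol Ω (fun M P r x => F₁ M P r x + r / h) f u)
    (hsup : ViscSupersol Ω (fun M P r x => F₂ M P r x + r / h) g v)
    (hy : y ∈ Ω) (hy' : y' ∈ Ω) (hvu : v y' ≤ u y) (hε : 0 ≤ ε) (hyy' : ‖y - y'‖ ≤ ε)
    (hq : ‖q + q'‖ ≤ ε) (hS : ∀ w, ⟪S w, w⟫ + ⟪S' w, w⟫ ≤ ε * ‖w‖ ^ 2)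
    (hu : ∀ᶠ z in 𝓝 y, u z ≤ u y + quadPoly q S y z)
    (hv : ∀ᶠ z in 𝓝 y', -v z ≤ -v y' + quadPoly q' S' y' z) :
    (u y - v y') / h ≤ f y - g y' + m ε + κ := by
  have hmax : IsLocalMax (fun z => u z - quadPoly q S y z) y := by
    filter_upwards [hu] with z hz
    rw [quadPoly_self]
    linarith
  have hmin : IsLocalMin (fun z => v z - quadPoly (-q') (-S') y' z) y' := by
    filter_upwards [hv] with z hz
    rw [quadPoly_neg, quadPoly_neg, quadPoly_self]
    linarith
  have hu_ineq := hsub y hy _ (contDiff_quadPoly q S y).contDiffAt hmax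
  have hv_ineq := hsup y' hy' _ (contDiff_quadPoly (-q') (-S') y').contDiffAt hmin
  rw [gradAt_quadPoly] at hu_ineq hv_ineq
  have hpair := hF _ _ q (-q') (u y) (v y') ε y hy y' hy'
    (hessAt_isSymm (contDiff_quadPoly q S y) y)
    (hessAt_isSymm (contDiff_quadPoly (-q') (-S') y') y') hε
    (fun w => by
      rw [quadForm_sub, quadForm_hessAt_quadPoly, quadForm_hessAt_quadPoly, neg_apply,
        inner_neg_left, sub_neg_eq_add]
      exact hS w)
    (by rwa [sub_neg_eq_add]) hyy' hvu
  rw [sub_div]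
  linarith

theorem StructuredPair.sub_le_of_frontier {b : ℝ} (hF : StructuredPair Ω F₁ F₂ m κ)
    (hm : Tendsto m (𝓝[>] 0) (𝓝 0)) (hΩ : IsOpen Ω) (hbd : Bornology.IsBounded Ω)
    (hh : 0 < h) (hb : 0 ≤ b)
    (hu : ContinuousOn u (closure Ω)) (hv : ContinuousOn v (closure Ω))
    (hg : ContinuousOn g (closure Ω)) (hfg : ∀ x ∈ Ω, f x - g x + κ ≤ b / h)
    (hfr : ∀ x ∈ frontier Ω, u x - v x ≤ b)
    (hsub : ViscSubsol Ω (fun M P r x => F₁ M P r x + r / h) f u)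
    (hsup : ViscSupersol Ω (fun M P r x => F₂ M P r x + r / h) g v) :
    ∀ x ∈ closure Ω, u x - v x ≤ b := by
  by_contra! ⟨x, hx, hxb⟩
  have hK : IsCompact (closure Ω) := hbd.isCompact_closure
  set e := u x - v x - b
  have he : 0 < e / 4 := by linarith
  have heh : 0 < e / (4 * h) := div_pos (by linarith) (by positivity)
  have hsmall : ∀ᶠ ε in 𝓝[>] (0 : ℝ), ε ∈ Ioc 0 (e / 4) := Ioc_mem_nhdsGT he
  obtain ⟨ε, ⟨hε, hεe⟩, hmε, huε, hvε, hgε⟩ := (hsmall.and ((hm.eventually_lt_const heh).and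
    ((eventually_forall_norm_sub_lt hK hu he).and ((eventually_forall_norm_sub_lt hK hv he).and
      (eventually_forall_norm_sub_lt hK hg heh))))).exists
  obtain ⟨y, hy, y', hy', q, q', S, S', hyy', hval, hq, hS, htu, htv⟩ :=
    exists_touching_of_add hK ⟨x, hx⟩ hu hv.neg hε
  have huv : u x - v x ≤ u y - v y' + ε := by
    have := hval x hx
    simp only [Pi.neg_apply] at this
    linarith
  have hu_close := abs_lt.mp (huε y hy y' hy' hyy')
  have hv_close := abs_lt.mp (hvε y hy y' hy' hyy')
  have hg_close := abs_lt.mp (hgε y hy y' hy' hyy')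
  have hinterior : ∀ z ∈ closure Ω, b < u z - v z → z ∈ Ω := fun z hz hlt =>
    mem_of_mem_closure_of_notMem_frontier hΩ hz fun hzfr => hlt.not_ge (hfr z hzfr)
  have hyΩ : y ∈ Ω := hinterior y hy (by linarith)
  have hyΩ' : y' ∈ Ω := hinterior y' hy' (by linarith)
  rw [nhdsWithin_eq_nhds.mpr (mem_of_superset (hΩ.mem_nhds hyΩ) subset_closure)] at htu
  rw [nhdsWithin_eq_nhds.mpr (mem_of_superset (hΩ.mem_nhds hyΩ') subset_closure)] at htv
  have hvisc := hF.sub_div_le_of_touching hsub hsup hyΩ hyΩ' (by linarith) hε.le hyy'.le hq hS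
    htu htv
  have hupper : (u y - v y') / h < (b + e / 2) / h := by
    have hsplit : (b + e / 2) / h = b / h + 2 * (e / (4 * h)) := by field_simp; ring
    linarith [hfg y hyΩ]
  rw [div_lt_div_iff_of_pos_right hh] at hupper
  linarith

end Comparison

/-! ### The standing hypotheses -/

section Standing

variable {d : ℕ}

/-- The hypotheses on the open set `Ω` and the operator `F`. The structure condition is replaced by
its lower bound for ordered values of the unknown, a form that is invariant under `negOp`. -/
structure StandingHypotheses (Ω : Set (Eucl d))
    (F : Matrix (Fin d) (Fin d) ℝ → Eucl d → ℝ → Eucl d → ℝ → ℝ)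
    (lam Lam gam C₀ K : ℝ) (σ₁ σ₂ : ℝ → ℝ) : Prop where
  isOpen : IsOpen Ω
  isBounded : Bornology.IsBounded Ω
  lam_pos : 0 < lam
  lam_le : lam ≤ Lam
  gam_nonneg : 0 ≤ gam
  C₀_nonneg : 0 ≤ C₀
  K_nonneg : 0 ≤ K
  pucciMinus_le_sub : ∀ M N : Matrix (Fin d) (Fin d) ℝ, M.IsSymm → N.IsSymm →
    ∀ (P Q : Eucl d) (r s : ℝ), s ≤ r → ∀ x ∈ closure Ω, ∀ t ∈ Ici (0 : ℝ),
      pucciMinus lam Lam (M - N) - gam * ‖P - Q‖ ≤ F M P r x t - F N Q s x t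
  isModulus_space : IsModulus σ₁
  isModulus_time : IsModulus σ₂
  abs_sub_le : ∀ (M : Matrix (Fin d) (Fin d) ℝ) (P : Eucl d) (r : ℝ),
      ∀ x ∈ closure Ω, ∀ y ∈ closure Ω, ∀ t ∈ Ici (0 : ℝ), ∀ s ∈ Ici (0 : ℝ),
        |F M P r x t - F M P r y s| ≤ σ₁ ‖x - y‖ + σ₂ |t - s|
  time_modulus_le : ∀ h ∈ Ioc (0 : ℝ) 1, σ₂ h ≤ C₀ * h
  abs_zero_le : ∀ x ∈ closure Ω, ∀ t ∈ Ici (0 : ℝ), |F 0 0 0 x t| ≤ K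
  continuousOn : ContinuousOn
      (fun q : Matrix (Fin d) (Fin d) ℝ × Eucl d × ℝ × Eucl d × ℝ =>
        F q.1 q.2.1 q.2.2.1 q.2.2.2.1 q.2.2.2.2)
      (univ ×ˢ univ ×ˢ univ ×ˢ closure Ω ×ˢ Ici 0)

/-- The operator of the equation solved by `-u` when `u` solves the equation for `F`. -/
def negOp (F : Matrix (Fin d) (Fin d) ℝ → Eucl d → ℝ → Eucl d → ℝ → ℝ) :
    Matrix (Fin d) (Fin d) ℝ → Eucl d → ℝ → Eucl d → ℝ → ℝ :=
  fun M P r x t => -F (-M) (-P) (-r) x t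

variable {Ω : Set (Eucl d)} {F : Matrix (Fin d) (Fin d) ℝ → Eucl d → ℝ → Eucl d → ℝ → ℝ}
  {lam Lam gam C₀ K : ℝ} {σ₁ σ₂ : ℝ → ℝ}

lemma StandingHypotheses.neg (H : StandingHypotheses Ω F lam Lam gam C₀ K σ₁ σ₂) :
    StandingHypotheses Ω (negOp F) lam Lam gam C₀ K σ₁ σ₂ where
  isOpen := H.isOpen
  isBounded := H.isBounded
  lam_pos := H.lam_pos
  lam_le := H.lam_le
  gam_nonneg := H.gam_nonneg
  C₀_nonneg := H.C₀_nonneg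
  K_nonneg := H.K_nonneg
  pucciMinus_le_sub := fun M N hM hN P Q r s hrs x hx t ht => by
    have := H.pucciMinus_le_sub (-N) (-M) hN.neg hM.neg (-Q) (-P) (-s) (-r) (by linarith) x hx t ht
    rw [show -N - -M = M - N by abel, show -Q - -P = P - Q by abel] at this
    simp only [negOp]
    linarith
  isModulus_space := H.isModulus_space
  isModulus_time := H.isModulus_time
  abs_sub_le := fun M P r x hx y hy t ht s hs => by
    have := H.abs_sub_le (-M) (-P) (-r) x hx y hy t ht s hs
    simp only [negOp]
    rwa [neg_sub_neg, abs_sub_comm]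
  time_modulus_le := H.time_modulus_le
  abs_zero_le := fun x hx t ht => by
    have := H.abs_zero_le x hx t ht
    simpa [negOp] using this
  continuousOn := by
    have hc : Continuous (fun q : Matrix (Fin d) (Fin d) ℝ × Eucl d × ℝ × Eucl d × ℝ =>
        (-q.1, -q.2.1, -q.2.2.1, q.2.2.2.1, q.2.2.2.2)) := by fun_prop
    exact (H.continuousOn.comp hc.continuousOn (fun q hq => by simpa using hq)).neg

lemma ViscSubsol.neg {G : Matrix (Fin d) (Fin d) ℝ → Eucl d → ℝ → Eucl d → ℝ} {g u : Eucl d → ℝ}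
    (h : ViscSubsol Ω G g u) :
    ViscSupersol Ω (fun M P r x => -G (-M) (-P) (-r) x) (fun x => -g x) (fun x => -u x) := by
  intro x₀ hx φ hφ hloc
  have := h x₀ hx (fun x => -φ x) hφ.neg (hloc.neg.congr (Eventually.of_forall fun x => by
    simp only; ring))
  rw [gradAt_neg, hessAt_neg] at this
  simp only [neg_neg]
  linarith

lemma ViscSupersol.neg {G : Matrix (Fin d) (Fin d) ℝ → Eucl d → ℝ → Eucl d → ℝ}
    {g u : Eucl d → ℝ} (h : ViscSupersol Ω G g u) :
    ViscSubsol Ω (fun M P r x => -G (-M) (-P) (-r) x) (fun x => -g x) (fun x => -u x) := by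
  intro x₀ hx φ hφ hloc
  have := h x₀ hx (fun x => -φ x) hφ.neg (hloc.neg.congr (Eventually.of_forall fun x => by
    simp only; ring))
  rw [gradAt_neg, hessAt_neg] at this
  simp only [neg_neg]
  linarith

lemma RotheStep.neg {h : ℝ} {m : ℕ} {z z' : Eucl d → ℝ} (hz : RotheStep Ω F h m z z') :
    RotheStep Ω (negOp F) h m (fun x => -z x) (fun x => -z' x) := by
  obtain ⟨hcont, ⟨hsub, hsup⟩, hfr⟩ := hz
  have hop : (fun M P r x => -(F (-M) (-P) (-r) x ((m + 1) * h) + -r / h))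
      = fun M P r x => negOp F M P r x ((m + 1) * h) + r / h := by
    funext M P r x
    simp only [negOp]
    ring
  have hprev : (fun x => -(z x / h)) = fun x => -z x / h := funext fun x => (neg_div h (z x)).symm
  have hsub_neg := hsup.neg
  have hsup_neg := hsub.neg
  rw [hop, hprev] at hsub_neg hsup_neg
  exact ⟨hcont.neg, ⟨hsub_neg, hsup_neg⟩, fun x hx => neg_eq_zero.mpr (hfr x hx)⟩

lemma StandingHypotheses.of_structureCondition {ω : ℝ → ℝ → ℝ} (hlam : 0 < lam)
    (hlL : lam ≤ Lam) (hgam : 0 ≤ gam)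
    (hC₀ : 0 ≤ C₀) (hK : 0 ≤ K) (hΩopen : IsOpen Ω) (hΩbdd : Bornology.IsBounded Ω)
    (hFcont : ContinuousOn
      (fun q : Matrix (Fin d) (Fin d) ℝ × Eucl d × ℝ × Eucl d × ℝ =>
        F q.1 q.2.1 q.2.2.1 q.2.2.2.1 q.2.2.2.2)
      (univ ×ˢ univ ×ˢ univ ×ˢ closure Ω ×ˢ Ici 0))
    (hStruct : StructureCondition lam Lam gam ω (closure Ω) (Ici 0) F)
    (hσ₁ : IsModulus σ₁) (hσ₂ : IsModulus σ₂)
    (hjoint : ∀ (M : Matrix (Fin d) (Fin d) ℝ) (P : Eucl d) (r : ℝ),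
      ∀ x ∈ closure Ω, ∀ y ∈ closure Ω, ∀ t ∈ Ici (0 : ℝ), ∀ s ∈ Ici (0 : ℝ),
        |F M P r x t - F M P r y s| ≤ σ₁ ‖x - y‖ + σ₂ |t - s|)
    (hσ₂lin : ∀ h ∈ Ioc (0 : ℝ) 1, σ₂ h ≤ C₀ * h)
    (hFK : ∀ x ∈ closure Ω, ∀ t ∈ Ici (0 : ℝ), |F 0 0 0 x t| ≤ K) :
    StandingHypotheses Ω F lam Lam gam C₀ K σ₁ σ₂ where
  isOpen := hΩopen
  isBounded := hΩbdd
  lam_pos := hlam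
  lam_le := hlL
  gam_nonneg := hgam
  C₀_nonneg := hC₀
  K_nonneg := hK
  pucciMinus_le_sub := fun M N hM hN P Q r s hrs x hx t ht => by
    have hR : 0 < |r| + |s| + 1 := by positivity
    have hlower := (hStruct.2 _ hR M N hM hN P Q r s (by linarith [abs_nonneg s])
      (by linarith [abs_nonneg r]) x hx t ht).1
    rw [max_eq_right (by linarith), (hStruct.1 _ hR).2.2] at hlower
    linarith
  isModulus_space := hσ₁
  isModulus_time := hσ₂
  abs_sub_le := hjoint
  time_modulus_le := hσ₂lin
  abs_zero_le := hFK
  continuousOn := hFcont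

lemma IsModulus.nonneg {σ : ℝ → ℝ} (h : IsModulus σ) {r : ℝ} (hr : 0 ≤ r) : 0 ≤ σ r := by
  have := h.1 hr
  rwa [h.2.2] at this

lemma StandingHypotheses.structuredPair (H : StandingHypotheses Ω F lam Lam gam C₀ K σ₁ σ₂)
    {Ω' : Set (Eucl d)} {e : Eucl d} (hΩ' : Ω' ⊆ closure Ω) (he : ∀ x ∈ Ω', x + e ∈ closure Ω)
    {t₁ t₂ : ℝ} (ht₁ : 0 ≤ t₁) (ht₂ : 0 ≤ t₂) :
    StructuredPair Ω' (fun M P r x => F M P r (x + e) t₁) (fun M P r x => F M P r x t₂)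
      (fun c => Lam * (d * c) + gam * c + σ₁ c) (σ₁ ‖e‖ + σ₂ |t₁ - t₂|) := by
  intro M N P Q r s c x hx y hy hM hN hc hMN hPQ hxy hsr
  have hpucci := neg_mul_le_pucciMinus H.lam_pos.le H.lam_le hc
    (Matrix.isHermitian_iff_isSymm.mpr (hM.sub hN)) hMN
  have hmono := H.pucciMinus_le_sub M N hM hN P Q r s hsr y (hΩ' hy) t₂ ht₂
  have hspace := (abs_le.mp (H.abs_sub_le M P r x (hΩ' hx) y (hΩ' hy) t₂ ht₂ t₂ ht₂)).1
  have htranslate := (abs_le.mp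
    (H.abs_sub_le M P r (x + e) (he x hx) x (hΩ' hx) t₁ ht₁ t₂ ht₂)).1
  rw [sub_self, abs_zero, H.isModulus_time.2.2] at hspace
  rw [add_sub_cancel_left] at htranslate
  have hgrad := mul_le_mul_of_nonneg_left hPQ H.gam_nonneg
  have hσ := H.isModulus_space.1 hxy
  simp only
  linarith

lemma IsModulus.tendsto_linear_add {σ : ℝ → ℝ} (hσ : IsModulus σ) (a b : ℝ) :
    Tendsto (fun c => a * (d * c) + b * c + σ c) (𝓝[>] 0) (𝓝 0) := by
  have hcont : Continuous fun c : ℝ => a * (d * c) + b * c + σ c := by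
    have := hσ.2.1
    fun_prop
  have hlim := hcont.tendsto 0
  simp only [mul_zero, add_zero, hσ.2.2] at hlim
  exact hlim.mono_left nhdsWithin_le_nhds

lemma StandingHypotheses.le_of_strict_supersolution
    (H : StandingHypotheses Ω F lam Lam gam C₀ K σ₁ σ₂) {h t : ℝ} (ht : 0 ≤ t)
    {u f ψ : Eucl d → ℝ} (hu : ContinuousOn u (closure Ω)) (hψ : ContDiff ℝ 2 ψ)
    (hψ0 : ∀ x ∈ closure Ω, 0 ≤ ψ x) (hfr : ∀ x ∈ frontier Ω, u x ≤ ψ x)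
    (hsub : ViscSubsol Ω (fun M P r x => F M P r x t + r / h) f u)
    (hstrict : ∀ x ∈ Ω, ψ x < u x →
      f x - u x / h + K < pucciMinus lam Lam (hessAt ψ x) - gam * ‖gradAt ψ x‖) :
    ∀ x ∈ closure Ω, u x ≤ ψ x := by
  by_contra! hcon
  obtain ⟨x₁, hx₁, hlt⟩ := hcon
  obtain ⟨x₀, hx₀, hmax⟩ := H.isBounded.isCompact_closure.exists_isMaxOn ⟨x₁, hx₁⟩
    (hu.sub hψ.continuous.continuousOn)
  have hpos : ψ x₀ < u x₀ := by
    have : u x₁ - ψ x₁ ≤ u x₀ - ψ x₀ := hmax hx₁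
    linarith
  have hx₀Ω : x₀ ∈ Ω := mem_of_mem_closure_of_notMem_frontier H.isOpen hx₀
    fun hx => (hfr x₀ hx).not_gt hpos
  have hvisc := hsub x₀ hx₀Ω ψ hψ.contDiffAt
    ((hmax.on_subset subset_closure).isLocalMax (H.isOpen.mem_nhds hx₀Ω))
  have hmono := H.pucciMinus_le_sub (hessAt ψ x₀) 0 (hessAt_isSymm hψ x₀) Matrix.isSymm_zero
    (gradAt ψ x₀) 0 (u x₀) 0 ((hψ0 x₀ hx₀).trans hpos.le) x₀ hx₀ t ht
  have hzero := (abs_le.mp (H.abs_zero_le x₀ hx₀ t ht)).1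
  have hlarge := hstrict x₀ hx₀Ω hpos
  rw [sub_zero, sub_zero] at hmono
  linarith

end Standing

/-! ### The boundary barrier -/

section Barrier

variable {d : ℕ} {Ω : Set (Eucl d)} {f : Eucl d → ℝ} {lam Lam gam : ℝ}

/-- `f` is a `C²` defining function of `Ω` with nonvanishing derivative on the boundary. -/
structure IsDefiningFunction (f : Eucl d → ℝ) (Ω : Set (Eucl d)) : Prop where
  contDiff : ContDiff ℝ 2 f
  eq_setOf : Ω = {x | f x < 0}
  fderiv_ne_zero : ∀ x ∈ frontier Ω, fderiv ℝ f x ≠ 0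

lemma HasSmoothBoundary.exists_isDefiningFunction (h : HasSmoothBoundary Ω) :
    ∃ f, IsDefiningFunction f Ω :=
  let ⟨f, hf, hΩ, hne⟩ := h
  ⟨f, contDiff_infty.mp hf 2, hΩ, hne⟩

lemma IsDefiningFunction.isOpen (hf : IsDefiningFunction f Ω) : IsOpen Ω := by
  rw [hf.eq_setOf]
  exact isOpen_lt hf.contDiff.continuous continuous_const

lemma IsDefiningFunction.nonpos (hf : IsDefiningFunction f Ω) {x : Eucl d} (hx : x ∈ closure Ω) :
    f x ≤ 0 := by
  have hsub : Ω ⊆ {x | f x ≤ 0} := by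
    rw [hf.eq_setOf]
    exact fun y hy => le_of_lt (α := ℝ) hy
  exact closure_minimal hsub (isClosed_le hf.contDiff.continuous continuous_const) hx

lemma IsDefiningFunction.eq_zero (hf : IsDefiningFunction f Ω) {x : Eucl d}
    (hx : x ∈ frontier Ω) : f x = 0 := by
  refine le_antisymm (hf.nonpos hx.1) (not_lt.mp fun hlt => ?_)
  have hxΩ : x ∈ Ω := by rwa [hf.eq_setOf]
  exact hx.2 (by rwa [hf.isOpen.interior_eq])

lemma IsDefiningFunction.exists_le_norm_gradAt (hf : IsDefiningFunction f Ω)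
    (hbd : Bornology.IsBounded Ω) :
    ∃ c > 0, ∀ x ∈ closure Ω, -c < f x → c ≤ ‖gradAt f x‖ := by
  rcases (closure Ω).eq_empty_or_nonempty with hempty | hne
  · exact ⟨1, one_pos, fun x hx => by simp [hempty] at hx⟩
  have hcont : Continuous fun x => max (-f x) ‖gradAt f x‖ :=
    hf.contDiff.continuous.neg.max (continuous_gradAt hf.contDiff).norm
  obtain ⟨x₀, hx₀, hmin⟩ := hbd.isCompact_closure.exists_isMinOn hne hcont.continuousOn
  refine ⟨max (-f x₀) ‖gradAt f x₀‖, ?_, fun x hx hlt => ?_⟩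
  · by_cases hfr : x₀ ∈ frontier Ω
    · refine lt_max_of_lt_right (norm_pos_iff.mpr fun hgrad => hf.fderiv_ne_zero x₀ hfr ?_)
      ext v
      rw [← inner_gradAt, hgrad, inner_zero_left, zero_apply]
    · have hx₀Ω := mem_of_mem_closure_of_notMem_frontier hf.isOpen hx₀ hfr
      rw [hf.eq_setOf] at hx₀Ω
      exact lt_max_of_lt_left (neg_pos.mpr hx₀Ω)
  · have hle_max : max (-f x₀) ‖gradAt f x₀‖ ≤ max (-f x) ‖gradAt f x‖ := hmin hx
    rcases le_max_iff.mp hle_max with hle | hle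
    · exact absurd hle (by linarith)
    · exact hle

/-- The boundary barrier built from a defining function `f`: it vanishes where `f` does, and its
Hessian has an arbitrarily negative eigenvalue in the direction of `∇f` when `μ` is large. -/
def expBarrier (A μ : ℝ) (f : Eucl d → ℝ) (x : Eucl d) : ℝ := A * (1 - Real.exp (μ * f x))

lemma contDiff_expBarrier (hf : ContDiff ℝ 2 f) (A μ : ℝ) : ContDiff ℝ 2 (expBarrier A μ f) :=
  contDiff_const.mul (contDiff_const.sub (contDiff_const.mul hf).exp)

lemma hasDerivAt_expBarrier_profile (A μ r : ℝ) :
    HasDerivAt (fun r => A * (1 - Real.exp (μ * r))) (-(A * μ * Real.exp (μ * r))) r := by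
  have := ((((hasDerivAt_id r).const_mul μ).exp).const_sub 1).const_mul A
  exact this.congr_deriv (by simp only [id_eq]; ring)

lemma deriv_deriv_expBarrier_profile (A μ r : ℝ) :
    deriv (deriv fun r => A * (1 - Real.exp (μ * r))) r = -(A * μ * Real.exp (μ * r)) * μ := by
  rw [funext fun r => (hasDerivAt_expBarrier_profile A μ r).deriv]
  have := ((((hasDerivAt_id r).const_mul μ).exp).const_mul (A * μ)).neg
  exact (this.congr_deriv (by simp only [id_eq]; ring)).deriv

lemma gradAt_expBarrier (hf : ContDiff ℝ 2 f) (A μ : ℝ) (x : Eucl d) :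
    gradAt (expBarrier A μ f) x = -(A * μ * Real.exp (μ * f x)) • gradAt f x := by
  have hprofile := hasDerivAt_expBarrier_profile A μ (f x)
  rw [← hprofile.deriv]
  exact gradAt_comp hprofile.differentiableAt (hf.differentiable two_ne_zero x)

lemma hessAt_expBarrier (hf : ContDiff ℝ 2 f) (A μ : ℝ) (x : Eucl d) :
    hessAt (expBarrier A μ f) x = -(A * μ * Real.exp (μ * f x)) •
      (hessAt f x + μ • Matrix.vecMulVec (gradAt f x) (gradAt f x)) := by
  have hprofile : ContDiff ℝ 2 fun r => A * (1 - Real.exp (μ * r)) := by fun_prop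
  rw [smul_add, smul_smul, ← deriv_deriv_expBarrier_profile,
    ← (hasDerivAt_expBarrier_profile A μ (f x)).deriv]
  exact hessAt_comp hprofile hf x

lemma mul_le_pucciMinus_neg_smul_add_vecMulVec (hlam : 0 ≤ lam) (hlL : lam ≤ Lam)
    {M : Matrix (Fin d) (Fin d) ℝ} {p : Eucl d} {a μ H : ℝ} (ha : 0 ≤ a) (hμ : 0 ≤ μ)
    (hH : 0 ≤ H) (hM : M.IsSymm) (hquad : ∀ v, -quadForm M v ≤ H * ‖v‖ ^ 2) :
    a * (lam * μ * ‖p‖ ^ 2 - Lam * (d * H))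
      ≤ pucciMinus lam Lam (-a • (M + μ • Matrix.vecMulVec p p)) := by
  have hsymm : (-a • (M + μ • Matrix.vecMulVec p p)).IsSymm :=
    (hM.add (Matrix.IsSymm.smul (Matrix.transpose_vecMulVec _ _) μ)).smul (-a)
  have hupper : ∀ v, quadForm (-a • (M + μ • Matrix.vecMulVec p p)) v ≤ a * H * ‖v‖ ^ 2 := by
    intro v
    rw [quadForm_smul, quadForm_add, quadForm_smul, quadForm_vecMulVec_self, neg_mul,
      ← mul_neg, mul_assoc]
    have hdir : 0 ≤ μ * ⟪p, v⟫ ^ 2 := mul_nonneg hμ (sq_nonneg _)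
    exact mul_le_mul_of_nonneg_left (by linarith [hquad v]) ha
  have htrace : -M.trace ≤ d * H := by
    rw [← Matrix.trace_neg]
    exact trace_le_of_quadForm_le fun v => by rw [quadForm_neg]; exact hquad v
  have htrace_add : (M + μ • Matrix.vecMulVec p p).trace = M.trace + μ * ‖p‖ ^ 2 := by
    rw [Matrix.trace_add, Matrix.trace_smul, Matrix.trace_vecMulVec, ← real_inner_self_eq_norm_sq]
    rfl
  have hpucci := neg_mul_trace_sub_le_pucciMinus hlL (mul_nonneg ha hH)
    (Matrix.isHermitian_iff_isSymm.mpr hsymm) hupper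
  rw [Matrix.trace_smul, htrace_add, smul_eq_mul] at hpucci
  have := mul_le_mul_of_nonneg_left htrace (mul_nonneg hlam ha)
  linarith

lemma mul_le_pucciMinus_expBarrier (hf : ContDiff ℝ 2 f) (hlam : 0 ≤ lam) (hlL : lam ≤ Lam)
    (hgam : 0 ≤ gam) {A μ c G H : ℝ} (hA : 0 ≤ A) (hμ : 0 ≤ μ) (hc : 0 ≤ c) {x : Eucl d}
    (hcG : c ≤ ‖gradAt f x‖) (hG : ‖gradAt f x‖ ≤ G)
    (hH : ‖fderiv ℝ (fderiv ℝ f) x‖ ≤ H) :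
    A * μ * Real.exp (μ * f x) * (lam * μ * c ^ 2 - Lam * (d * H) - gam * G)
      ≤ pucciMinus lam Lam (hessAt (expBarrier A μ f) x)
        - gam * ‖gradAt (expBarrier A μ f) x‖ := by
  have ha : 0 ≤ A * μ * Real.exp (μ * f x) := by positivity
  have hquad : ∀ v, -quadForm (hessAt f x) v ≤ H * ‖v‖ ^ 2 := fun v =>
    calc -quadForm (hessAt f x) v ≤ ‖fderiv ℝ (fderiv ℝ f) x‖ * ‖v‖ ^ 2 :=
          (neg_le_abs _).trans (abs_quadForm_hessAt_le hf x v)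
      _ ≤ H * ‖v‖ ^ 2 := by gcongr
  rw [hessAt_expBarrier hf, gradAt_expBarrier hf, norm_smul, norm_neg, Real.norm_of_nonneg ha]
  refine le_trans ?_ (sub_le_sub_right (mul_le_pucciMinus_neg_smul_add_vecMulVec hlam hlL ha hμ
    ((norm_nonneg (fderiv ℝ (fderiv ℝ f) x)).trans hH) (hessAt_isSymm hf x) hquad) _)
  rw [mul_left_comm gam, ← mul_sub]
  gcongr

lemma exists_pos_one_le_mul_sub {a : ℝ} (ha : 0 < a) (b : ℝ) : ∃ μ > 0, 1 ≤ a * μ - b := by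
  refine ⟨(1 + |b|) / a, by positivity, ?_⟩
  rw [mul_div_cancel₀ _ ha.ne']
  linarith [le_abs_self b]

lemma exists_pos_lt_mul_and_le_mul {a b : ℝ} (ha : 0 < a) (hb : 0 < b) (L B : ℝ) :
    ∃ A > 0, L < A * a ∧ B ≤ A * b :=
  ((eventually_gt_atTop 0).and
    (((tendsto_id.atTop_mul_const ha).eventually_gt_atTop L).and
      ((tendsto_id.atTop_mul_const hb).eventually_ge_atTop B))).exists

theorem IsDefiningFunction.exists_barrier (hf : IsDefiningFunction f Ω)
    (hbd : Bornology.IsBounded Ω) (hlam : 0 < lam) (hlL : lam ≤ Lam) (hgam : 0 ≤ gam) (L B : ℝ) :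
    ∃ ψ : Eucl d → ℝ, ContDiff ℝ 2 ψ ∧ (∀ x ∈ closure Ω, 0 ≤ ψ x) ∧
      (∀ x ∈ frontier Ω, ψ x = 0) ∧
      ∀ x ∈ Ω, ψ x < B → L < pucciMinus lam Lam (hessAt ψ x) - gam * ‖gradAt ψ x‖ := by
  have hK := hbd.isCompact_closure
  obtain ⟨c, hc, hstrip⟩ := hf.exists_le_norm_gradAt hbd
  obtain ⟨G, hG⟩ := hK.exists_bound_of_continuousOn (continuous_gradAt hf.contDiff).continuousOn
  obtain ⟨H, hH⟩ :=
    hK.exists_bound_of_continuousOn (f := fderiv ℝ (fderiv ℝ f))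
      (continuous_fderiv_fderiv hf.contDiff).continuousOn
  obtain ⟨μ, hμ, hμ_large⟩ :=
    exists_pos_one_le_mul_sub (mul_pos hlam (pow_pos hc 2)) (Lam * (d * H) + gam * G)
  have hexp_lt : Real.exp (-(μ * c)) < 1 :=
    Real.exp_lt_one_iff.mpr (neg_lt_zero.mpr (mul_pos hμ hc))
  obtain ⟨A, hA, hA_op, hA_bound⟩ := exists_pos_lt_mul_and_le_mul
    (mul_pos hμ (Real.exp_pos (-(μ * c)))) (sub_pos.mpr hexp_lt) L B
  refine ⟨expBarrier A μ f, contDiff_expBarrier hf.contDiff A μ, fun x hx => ?_, fun x hx => ?_,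
    fun x hx hlt => ?_⟩
  · refine mul_nonneg hA.le (sub_nonneg.mpr (Real.exp_le_one_iff.mpr ?_))
    exact mul_nonpos_of_nonneg_of_nonpos hμ.le (hf.nonpos hx)
  · rw [expBarrier, hf.eq_zero hx, mul_zero, Real.exp_zero, sub_self, mul_zero]
  · have hexp : Real.exp (-(μ * c)) < Real.exp (μ * f x) := by
      by_contra! hle
      have : A * (1 - Real.exp (-(μ * c))) ≤ expBarrier A μ f x :=
        mul_le_mul_of_nonneg_left (sub_le_sub_left hle 1) hA.le
      linarith
    have hfx : -c < f x := by
      rw [Real.exp_lt_exp, ← mul_neg] at hexp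
      exact lt_of_mul_lt_mul_left hexp hμ.le
    have hx' := subset_closure hx
    calc L < A * (μ * Real.exp (-(μ * c))) := hA_op
      _ ≤ A * μ * Real.exp (μ * f x) * 1 := by rw [mul_one, mul_assoc]; gcongr
      _ ≤ A * μ * Real.exp (μ * f x) * (lam * μ * c ^ 2 - Lam * (d * H) - gam * G) := by
          gcongr
          linarith
      _ ≤ _ := mul_le_pucciMinus_expBarrier hf.contDiff hlam.le hlL hgam hA.le hμ.le hc.le
          (hstrip x hx' hfx) (hG x hx') (hH x hx')

end Barrier

/-! ### Uniform estimates for the Rothe approximations -/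

section Rothe

variable {d : ℕ}

/-- `z` is the sequence of Rothe approximations of step `h`, started from zero. -/
def IsRothe (Ω : Set (Eucl d)) (F : Matrix (Fin d) (Fin d) ℝ → Eucl d → ℝ → Eucl d → ℝ → ℝ)
    (h : ℝ) (z : ℕ → Eucl d → ℝ) : Prop :=
  (∀ x, z 0 x = 0) ∧ ∀ m : ℕ, RotheStep Ω F h m (z m) (z (m + 1))

variable {Ω : Set (Eucl d)} {F : Matrix (Fin d) (Fin d) ℝ → Eucl d → ℝ → Eucl d → ℝ → ℝ}
  {lam Lam gam C₀ K : ℝ} {σ₁ σ₂ : ℝ → ℝ} {h T : ℝ} {z : ℕ → Eucl d → ℝ}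

lemma IsRothe.neg (hz : IsRothe Ω F h z) : IsRothe Ω (negOp F) h (fun m x => -z m x) :=
  ⟨fun x => neg_eq_zero.mpr (hz.1 x), fun m => (hz.2 m).neg⟩

lemma IsRothe.continuousOn (hz : IsRothe Ω F h z) : ∀ m, ContinuousOn (z m) (closure Ω)
  | 0 => continuousOn_const.congr fun x _ => hz.1 x
  | m + 1 => (hz.2 m).1

lemma IsRothe.eq_zero_of_mem_frontier (hz : IsRothe Ω F h z) {x : Eucl d}
    (hx : x ∈ frontier Ω) : ∀ m, z m x = 0
  | 0 => hz.1 x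
  | m + 1 => (hz.2 m).2.2 x hx

lemma StandingHypotheses.sub_le_of_frontier (H : StandingHypotheses Ω F lam Lam gam C₀ K σ₁ σ₂)
    {t₁ t₂ b : ℝ} {f g u v : Eucl d → ℝ} (ht₁ : 0 ≤ t₁) (ht₂ : 0 ≤ t₂) (hh : 0 < h) (hb : 0 ≤ b)
    (hu : ContinuousOn u (closure Ω)) (hv : ContinuousOn v (closure Ω))
    (hg : ContinuousOn g (closure Ω)) (hfg : ∀ x ∈ Ω, f x - g x + σ₂ |t₁ - t₂| ≤ b / h)
    (hfr : ∀ x ∈ frontier Ω, u x - v x ≤ b)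
    (hsub : ViscSubsol Ω (fun M P r x => F M P r x t₁ + r / h) f u)
    (hsup : ViscSupersol Ω (fun M P r x => F M P r x t₂ + r / h) g v) :
    ∀ x ∈ closure Ω, u x - v x ≤ b := by
  have hpair := H.structuredPair (e := 0) subset_closure
    (fun x hx => by rw [add_zero]; exact subset_closure hx) ht₁ ht₂
  simp only [add_zero, norm_zero, H.isModulus_space.2.2, zero_add] at hpair
  exact hpair.sub_le_of_frontier (H.isModulus_space.tendsto_linear_add _ _) H.isOpen H.isBounded hh
    hb hu hv hg hfg hfr hsub hsup

lemma StandingHypotheses.rothe_one_le (H : StandingHypotheses Ω F lam Lam gam C₀ K σ₁ σ₂)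
    (hh : 0 < h) (hz : IsRothe Ω F h z) : ∀ x ∈ closure Ω, z 1 x ≤ K * h := by
  obtain ⟨hcont, ⟨hsub, -⟩, hfr⟩ := hz.2 0
  have hKh : 0 ≤ K * h := mul_nonneg H.K_nonneg hh.le
  refine H.le_of_strict_supersolution (t := ((0 : ℕ) + 1) * h) (by simpa using hh.le) hcont
    contDiff_const (fun _ _ => hKh) (fun x hx => (hfr x hx).trans_le hKh) hsub fun x _ hlt => ?_
  have hdiv : K < z 1 x / h := by rwa [lt_div_iff₀ hh]
  rw [hessAt_const, gradAt_const, pucciMinus_zero, norm_zero, hz.1 x, mul_zero, sub_zero,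
    zero_div]
  linarith

lemma StandingHypotheses.abs_rothe_succ_sub_le_step
    (H : StandingHypotheses Ω F lam Lam gam C₀ K σ₁ σ₂) (hh : h ∈ Ioc (0 : ℝ) 1)
    (hz : IsRothe Ω F h z) {m : ℕ} {c : ℝ} (hc : 0 ≤ c)
    (hprev : ∀ x ∈ closure Ω, |z (m + 1) x - z m x| ≤ c * h) :
    ∀ x ∈ closure Ω, |z (m + 2) x - z (m + 1) x| ≤ (c + C₀ * h) * h := by
  have hb : 0 ≤ (c + C₀ * h) * h :=
    mul_nonneg (add_nonneg hc (mul_nonneg H.C₀_nonneg hh.1.le)) hh.1.le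
  have htime : ∀ k : ℕ, (0 : ℝ) ≤ (k + 1) * h := fun k =>
    mul_nonneg (by positivity) hh.1.le
  have hgap : |((m + 1 : ℕ) + 1) * h - (m + 1) * h| = h := by
    rw [← sub_mul, Nat.cast_succ, add_sub_cancel_left, one_mul, abs_of_pos hh.1]
  have hσ : σ₂ h ≤ C₀ * h := H.time_modulus_le h hh
  have hdiv : ∀ x ∈ closure Ω, |z (m + 1) x / h - z m x / h| ≤ c := by
    intro x hx
    rw [← sub_div, abs_div, abs_of_pos hh.1, div_le_iff₀ hh.1]
    exact hprev x hx
  have hfr : ∀ k l, ∀ x ∈ frontier Ω, z k x - z l x ≤ (c + C₀ * h) * h := fun k l x hx => by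
    rwa [hz.eq_zero_of_mem_frontier hx, hz.eq_zero_of_mem_frontier hx, sub_zero]
  have hupper := H.sub_le_of_frontier (htime (m + 1)) (htime m) hh.1 hb (hz.continuousOn (m + 2))
    (hz.continuousOn (m + 1)) ((hz.continuousOn m).div_const h)
    (fun x hx => by
      rw [hgap, mul_div_cancel_right₀ _ hh.1.ne']
      linarith [(abs_le.mp (hdiv x (subset_closure hx))).2])
    (hfr _ _) (hz.2 (m + 1)).2.1.1 (hz.2 m).2.1.2
  have hlower := H.sub_le_of_frontier (htime m) (htime (m + 1)) hh.1 hb (hz.continuousOn (m + 1))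
    (hz.continuousOn (m + 2)) ((hz.continuousOn (m + 1)).div_const h)
    (fun x hx => by
      rw [abs_sub_comm, hgap, mul_div_cancel_right₀ _ hh.1.ne']
      linarith [(abs_le.mp (hdiv x (subset_closure hx))).1])
    (hfr _ _) (hz.2 m).2.1.1 (hz.2 (m + 1)).2.1.2
  exact fun x hx => abs_sub_le_iff.mpr ⟨hupper x hx, hlower x hx⟩

lemma StandingHypotheses.abs_rothe_succ_sub_le
    (H : StandingHypotheses Ω F lam Lam gam C₀ K σ₁ σ₂) (hh : h ∈ Ioc (0 : ℝ) 1)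
    (hz : IsRothe Ω F h z) (m : ℕ) :
    ∀ x ∈ closure Ω, |z (m + 1) x - z m x| ≤ (K + C₀ * (m * h)) * h := by
  induction m with
  | zero =>
    intro x hx
    have hupper := H.rothe_one_le hh.1 hz x hx
    have hlower := H.neg.rothe_one_le hh.1 hz.neg x hx
    rw [hz.1 x, abs_le]
    simp only [zero_add, Nat.cast_zero, zero_mul, mul_zero, add_zero, sub_zero]
    constructor <;> linarith
  | succ m ih =>
    have hc : 0 ≤ K + C₀ * (m * h) := add_nonneg H.K_nonneg
      (mul_nonneg H.C₀_nonneg (mul_nonneg m.cast_nonneg hh.1.le))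
    have heq : K + C₀ * ((m + 1 : ℕ) * h) = K + C₀ * (m * h) + C₀ * h := by
      push_cast
      ring
    rw [heq]
    exact H.abs_rothe_succ_sub_le_step hh hz hc ih

lemma StandingHypotheses.abs_rothe_add_sub_le
    (H : StandingHypotheses Ω F lam Lam gam C₀ K σ₁ σ₂) (hh : h ∈ Ioc (0 : ℝ) 1)
    (hz : IsRothe Ω F h z) {x : Eucl d} (hx : x ∈ closure Ω) (m k : ℕ)
    (hT : (m + k : ℕ) * h ≤ T) :
    |z (m + k) x - z m x| ≤ (K + C₀ * T) * (k * h) := by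
  induction k with
  | zero => simp
  | succ k ih =>
    have hTk : ((m + k : ℕ) : ℝ) * h ≤ T := by
      rw [← add_assoc, Nat.cast_succ] at hT
      linarith [hh.1]
    have hstep : |z (m + k + 1) x - z (m + k) x| ≤ (K + C₀ * T) * h :=
      (H.abs_rothe_succ_sub_le hh hz (m + k) x hx).trans (mul_le_mul_of_nonneg_right
        (add_le_add_right (mul_le_mul_of_nonneg_left hTk H.C₀_nonneg) K) hh.1.le)
    calc |z (m + k + 1) x - z m x|
        ≤ |z (m + k + 1) x - z (m + k) x| + |z (m + k) x - z m x| := _root_.abs_sub_le _ _ _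
      _ ≤ (K + C₀ * T) * h + (K + C₀ * T) * (k * h) := add_le_add hstep (ih hTk)
      _ = (K + C₀ * T) * ((k + 1 : ℕ) * h) := by push_cast; ring

lemma StandingHypotheses.rothe_le_barrier (H : StandingHypotheses Ω F lam Lam gam C₀ K σ₁ σ₂)
    (hT : 0 ≤ T) (hh : h ∈ Ioc (0 : ℝ) 1) (hz : IsRothe Ω F h z) {ψ : Eucl d → ℝ}
    (hψ : ContDiff ℝ 2 ψ) (hψ0 : ∀ x ∈ closure Ω, 0 ≤ ψ x) (hψfr : ∀ x ∈ frontier Ω, ψ x = 0)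
    (hstrict : ∀ x ∈ Ω, ψ x < (K + C₀ * T) * T →
      K + C₀ * T + K < pucciMinus lam Lam (hessAt ψ x) - gam * ‖gradAt ψ x‖) :
    ∀ m : ℕ, m * h ≤ T → ∀ x ∈ closure Ω, z m x ≤ ψ x
  | 0, _ => fun x hx => (hz.1 x).trans_le (hψ0 x hx)
  | m + 1, hm => by
    obtain ⟨hcont, ⟨hsub, -⟩, hfr⟩ := hz.2 m
    refine H.le_of_strict_supersolution (mul_nonneg (by positivity) hh.1.le) hcont hψ hψ0
      (fun x hx => (hfr x hx).trans_le (hψfr x hx).ge) hsub fun x hx hlt => ?_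
    have hx' := subset_closure hx
    have hincr := (abs_le.mp (H.abs_rothe_add_sub_le hh hz hx' m 1 hm)).1
    have hsize := (abs_le.mp (H.abs_rothe_add_sub_le (T := T) hh hz hx' 0 (m + 1)
      (by rwa [zero_add]))).2
    have hC : 0 ≤ K + C₀ * T := add_nonneg H.K_nonneg (mul_nonneg H.C₀_nonneg hT)
    have hbound := mul_le_mul_of_nonneg_left hm hC
    rw [hz.1 x, zero_add, sub_zero] at hsize
    have hquot : z m x / h - z (m + 1) x / h ≤ K + C₀ * T := by
      rw [← sub_div, div_le_iff₀ hh.1]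
      rw [Nat.cast_one, one_mul] at hincr
      linarith
    linarith [hstrict x hx (by linarith)]

lemma StandingHypotheses.exists_abs_rothe_le (H : StandingHypotheses Ω F lam Lam gam C₀ K σ₁ σ₂)
    {f : Eucl d → ℝ} (hf : IsDefiningFunction f Ω) (hT : 0 ≤ T) :
    ∃ ψ : Eucl d → ℝ, Continuous ψ ∧ (∀ x ∈ frontier Ω, ψ x = 0) ∧
      ∀ h ∈ Ioc (0 : ℝ) 1, ∀ z, IsRothe Ω F h z →
        ∀ m : ℕ, m * h ≤ T → ∀ x ∈ closure Ω, |z m x| ≤ ψ x := by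
  obtain ⟨ψ, hψ, hψ0, hψfr, hstrict⟩ := hf.exists_barrier H.isBounded H.lam_pos H.lam_le
    H.gam_nonneg (K + C₀ * T + K) ((K + C₀ * T) * T)
  exact ⟨ψ, hψ.continuous, hψfr, fun h hh z hz m hm x hx => abs_le'.mpr
    ⟨H.rothe_le_barrier hT hh hz hψ hψ0 hψfr hstrict m hm x hx,
      H.neg.rothe_le_barrier hT hh hz.neg hψ hψ0 hψfr hstrict m hm x hx⟩⟩

lemma ViscSubsol.translate {G : Matrix (Fin d) (Fin d) ℝ → Eucl d → ℝ → Eucl d → ℝ}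
    {g u : Eucl d → ℝ} (hu : ViscSubsol Ω G g u) (e : Eucl d) :
    ViscSubsol {x | x + e ∈ Ω} (fun M P r x => G M P r (x + e))
      (fun x => g (x + e)) (fun x => u (x + e)) := by
  intro x₀ hx φ hφ hmax
  have hsub : Tendsto (fun y => y - e) (𝓝 (x₀ + e)) (𝓝 x₀) := by
    have := (continuous_sub_right e).tendsto (x₀ + e)
    rwa [add_sub_cancel_right] at this
  have hφ' : ContDiffAt ℝ 2 (fun y => φ (y - e)) (x₀ + e) := by
    refine ContDiffAt.comp (x₀ + e) ?_ (contDiffAt_id.sub contDiffAt_const)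
    rwa [add_sub_cancel_right]
  have hmax' : IsLocalMax (fun y => u y - φ (y - e)) (x₀ + e) := by
    filter_upwards [hsub.eventually hmax] with y hy
    simpa only [sub_add_cancel, add_sub_cancel_right] using hy
  have := hu (x₀ + e) hx _ hφ' hmax'
  rwa [gradAt_comp_sub, hessAt_comp_sub, add_sub_cancel_right] at this

lemma IsRothe.translate_sub_le_of_notMem (hz : IsRothe Ω F h z) (hΩ : IsOpen Ω)
    {ψ : Eucl d → ℝ} {b : ℝ} {e x : Eucl d} {m : ℕ} (hψfr : ∀ x ∈ frontier Ω, ψ x = 0)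
    (hzψ : ∀ x ∈ closure Ω, |z m x| ≤ ψ x) (hψe : |ψ (x + e) - ψ x| ≤ b)
    (hx : x ∈ closure Ω) (hxe : x + e ∈ closure Ω) (hnot : ¬(x ∈ Ω ∧ x + e ∈ Ω)) :
    z m (x + e) - z m x ≤ b := by
  rcases not_and_or.mp hnot with hxΩ | hxeΩ
  · have hfr : x ∈ frontier Ω := by rw [hΩ.frontier_eq]; exact ⟨hx, hxΩ⟩
    rw [hψfr x hfr] at hψe
    rw [hz.eq_zero_of_mem_frontier hfr]
    linarith [(abs_le.mp (hzψ _ hxe)).2, (abs_le.mp hψe).2]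
  · have hfr : x + e ∈ frontier Ω := by rw [hΩ.frontier_eq]; exact ⟨hxe, hxeΩ⟩
    rw [hψfr _ hfr] at hψe
    rw [hz.eq_zero_of_mem_frontier hfr]
    linarith [(abs_le.mp (hzψ x hx)).1, (abs_le.mp hψe).1]

lemma StandingHypotheses.rothe_translate_sub_le_step
    (H : StandingHypotheses Ω F lam Lam gam C₀ K σ₁ σ₂) (hh : 0 < h) (hz : IsRothe Ω F h z)
    {b : ℝ} (hb : 0 ≤ b) {e : Eucl d} {m : ℕ}
    (hprev : ∀ x ∈ Ω, x + e ∈ Ω → z m (x + e) - z m x ≤ b)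
    (hbdry : ∀ x ∈ closure Ω, x + e ∈ closure Ω → ¬(x ∈ Ω ∧ x + e ∈ Ω) →
      z (m + 1) (x + e) - z (m + 1) x ≤ b) :
    ∀ x ∈ closure Ω, x + e ∈ closure Ω →
      z (m + 1) (x + e) - z (m + 1) x ≤ b + h * σ₁ ‖e‖ := by
  have hσ : 0 ≤ h * σ₁ ‖e‖ := mul_nonneg hh.le (H.isModulus_space.nonneg (norm_nonneg e))
  have hadd : Continuous fun x : Eucl d => x + e := continuous_add_const e
  let Ω' := {x | x ∈ Ω ∧ x + e ∈ Ω}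
  have hΩ' : IsOpen Ω' := H.isOpen.inter (H.isOpen.preimage hadd)
  have hcl : closure Ω' ⊆ closure Ω := closure_mono fun x hx => hx.1
  have hcl_add : MapsTo (· + e) (closure Ω') (closure Ω) :=
    MapsTo.closure (fun x hx => hx.2) hadd
  have htime : (0 : ℝ) ≤ (m + 1) * h := mul_nonneg (by positivity) hh.le
  have hpair := H.structuredPair (Ω' := Ω') (fun x hx => subset_closure hx.1)
    (fun x hx => subset_closure hx.2) htime htime
  rw [sub_self, abs_zero, H.isModulus_time.2.2, add_zero] at hpair
  obtain ⟨hcont, ⟨hsub, hsup⟩, -⟩ := hz.2 m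
  have hcomp := hpair.sub_le_of_frontier (H.isModulus_space.tendsto_linear_add _ _) hΩ'
    (H.isBounded.subset fun x hx => hx.1) hh (add_nonneg hb hσ)
    (hcont.comp hadd.continuousOn hcl_add) (hcont.mono hcl)
    (((hz.continuousOn m).mono hcl).div_const h)
    (fun x hx => by
      rw [add_div, mul_div_cancel_left₀ _ hh.ne', ← sub_div]
      exact add_le_add_left (div_le_div_of_nonneg_right (hprev x hx.1 hx.2) hh.le) _)
    (fun x hx => (hbdry x (hcl hx.1) (hcl_add hx.1) fun hmem => by
      rw [hΩ'.frontier_eq] at hx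
      exact hx.2 hmem).trans (le_add_of_nonneg_right hσ))
    (fun x hx => hsub.translate e x hx.2) (fun x hx => hsup x hx.1)
  intro x hx hxe
  by_cases hxΩ' : x ∈ Ω'
  · exact hcomp x (subset_closure hxΩ')
  · exact (hbdry x hx hxe hxΩ').trans (le_add_of_nonneg_right hσ)

lemma StandingHypotheses.rothe_translate_sub_le
    (H : StandingHypotheses Ω F lam Lam gam C₀ K σ₁ σ₂) (hh : 0 < h) (hz : IsRothe Ω F h z)
    {ψ : Eucl d → ℝ} {b : ℝ} {e : Eucl d} (hψfr : ∀ x ∈ frontier Ω, ψ x = 0)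
    (hzψ : ∀ m : ℕ, m * h ≤ T → ∀ x ∈ closure Ω, |z m x| ≤ ψ x) (hb : 0 ≤ b)
    (hψe : ∀ x ∈ closure Ω, x + e ∈ closure Ω → |ψ (x + e) - ψ x| ≤ b) (m : ℕ)
    (hm : m * h ≤ T) :
    ∀ x ∈ closure Ω, x + e ∈ closure Ω → z m (x + e) - z m x ≤ b + m * h * σ₁ ‖e‖ := by
  induction m with
  | zero =>
    intro x _ _
    rw [hz.1, hz.1, Nat.cast_zero, zero_mul, zero_mul, sub_self, add_zero]
    exact hb
  | succ m ih =>
    have hm' : (m : ℝ) * h ≤ T := by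
      rw [Nat.cast_succ] at hm
      linarith
    have hσ : 0 ≤ m * h * σ₁ ‖e‖ := mul_nonneg (mul_nonneg m.cast_nonneg hh.le)
      (H.isModulus_space.nonneg (norm_nonneg e))
    have heq : b + (m + 1 : ℕ) * h * σ₁ ‖e‖ = b + m * h * σ₁ ‖e‖ + h * σ₁ ‖e‖ := by
      push_cast
      ring
    rw [heq]
    exact H.rothe_translate_sub_le_step hh hz (add_nonneg hb hσ)
      (fun x hx hxe => ih hm' x (subset_closure hx) (subset_closure hxe))
      fun x hx hxe hnot => (hz.translate_sub_le_of_notMem H.isOpen hψfr (hzψ (m + 1) hm)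
        (hψe x hx hxe) hx hxe hnot).trans (le_add_of_nonneg_right hσ)

lemma StandingHypotheses.exists_abs_rothe_sub_le
    (H : StandingHypotheses Ω F lam Lam gam C₀ K σ₁ σ₂) {f : Eucl d → ℝ}
    (hf : IsDefiningFunction f Ω) (hT : 0 < T) {η : ℝ} (hη : 0 < η) :
    ∃ δ > 0, ∀ h ∈ Ioc (0 : ℝ) 1, ∀ z, IsRothe Ω F h z → ∀ m : ℕ, m * h ≤ T →
      ∀ x ∈ closure Ω, ∀ y ∈ closure Ω, ‖x - y‖ < δ → |z m x - z m y| ≤ η := by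
  obtain ⟨ψ, hψ, hψfr, hzψ⟩ := H.exists_abs_rothe_le hf hT.le
  have hψη := eventually_forall_norm_sub_lt H.isBounded.isCompact_closure hψ.continuousOn
    (half_pos hη)
  have hση : ∀ᶠ δ in 𝓝[>] (0 : ℝ), σ₁ δ < η / (2 * T) := by
    refine nhdsWithin_le_nhds (H.isModulus_space.2.1.tendsto 0 |>.eventually_lt_const ?_)
    rw [H.isModulus_space.2.2]
    positivity
  obtain ⟨δ, ⟨hδψ, hδσ⟩, hδ⟩ := ((hψη.and hση).and self_mem_nhdsWithin).exists
  have hone : ∀ h ∈ Ioc (0 : ℝ) 1, ∀ z, IsRothe Ω F h z → ∀ m : ℕ, m * h ≤ T →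
      ∀ x ∈ closure Ω, ∀ y ∈ closure Ω, ‖x - y‖ < δ → z m x - z m y ≤ η := by
    intro h hh z hz m hm x hx y hy hxy
    have hσ : σ₁ ‖x - y‖ ≤ η / (2 * T) := (H.isModulus_space.1 hxy.le).trans hδσ.le
    have htrans := H.rothe_translate_sub_le (e := x - y) hh.1 hz hψfr (hzψ h hh z hz)
      (half_pos hη).le (fun w hw hwe => (hδψ _ hwe _ hw (by rwa [add_sub_cancel_left])).le) m hm
      y hy (by rwa [add_sub_cancel])
    rw [add_sub_cancel] at htrans
    calc z m x - z m y ≤ η / 2 + m * h * σ₁ ‖x - y‖ := htrans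
      _ ≤ η / 2 + T * (η / (2 * T)) := by
          have := H.isModulus_space.nonneg (norm_nonneg (x - y))
          gcongr
      _ = η := by field_simp; ring
  exact ⟨δ, hδ, fun h hh z hz m hm x hx y hy hxy => abs_sub_le_iff.mpr
    ⟨hone h hh z hz m hm x hx y hy hxy, hone h hh z hz m hm y hy x hx (by rwa [norm_sub_rev])⟩⟩

end Rothe

/-! ### The limit is a viscosity subsolution -/

section TestFunctions

variable {d : ℕ} {φ ψ : Eucl d → ℝ → ℝ}

lemma C21.neg (hφ : C21 φ) : C21 fun x t => -φ x t := by
  obtain ⟨hspace, htime, hcont, hhess, hgrad, hderiv⟩ := hφ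
  refine ⟨fun t => (hspace t).neg, fun x => (htime x).neg, hcont.neg, ?_, ?_, ?_⟩
  · simp only [hessAt_neg]
    exact hhess.neg
  · simp only [gradAt_neg]
    exact hgrad.neg
  · simp only [deriv.fun_neg]
    exact hderiv.neg

lemma C21.add (hφ : C21 φ) (hψ : C21 ψ) : C21 fun x t => φ x t + ψ x t := by
  obtain ⟨hspace, htime, hcont, hhess, hgrad, hderiv⟩ := hφ
  obtain ⟨hspace', htime', hcont', hhess', hgrad', hderiv'⟩ := hψ
  refine ⟨fun t => (hspace t).add (hspace' t), fun x => (htime x).add (htime' x),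
    hcont.add hcont', ?_, ?_, ?_⟩
  · simp only [hessAt_add (hspace _) (hspace' _)]
    exact hhess.add hhess'
  · simp only [gradAt_add ((hspace _).differentiable two_ne_zero _)
      ((hspace' _).differentiable two_ne_zero _)]
    exact hgrad.add hgrad'
  · simp only [deriv_fun_add ((htime _).differentiable one_ne_zero _)
      ((htime' _).differentiable one_ne_zero _)]
    exact hderiv.add hderiv'

lemma c21_of_space {p : Eucl d → ℝ} (hp : ContDiff ℝ 2 p) : C21 fun x (_ : ℝ) => p x :=
  ⟨fun _ => hp, fun _ => contDiff_const, hp.continuous.comp continuous_fst,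
    (continuous_hessAt hp).comp continuous_fst, (continuous_gradAt hp).comp continuous_fst,
    by simpa only [deriv_const] using continuous_const⟩

lemma c21_of_time {q : ℝ → ℝ} (hq : ContDiff ℝ 1 q) : C21 fun (_ : Eucl d) t => q t :=
  ⟨fun _ => contDiff_const, fun _ => hq, hq.continuous.comp continuous_snd,
    by simpa only [hessAt_const] using continuous_const,
    by simpa only [gradAt_const] using continuous_const,
    (hq.continuous_deriv le_rfl).comp continuous_snd⟩

/-- The test function `φ` made to touch strictly at `(x₀, t₀)`; the added terms do not change the
first two space derivatives or the time derivative at that point. -/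
def penalize (φ : Eucl d → ℝ → ℝ) (x₀ : Eucl d) (t₀ : ℝ) (x : Eucl d) (t : ℝ) : ℝ :=
  φ x t + (‖x - x₀‖ ^ 4 + (t - t₀) ^ 2)

variable (x₀ : Eucl d) (t₀ : ℝ)

lemma penalize_self (φ : Eucl d → ℝ → ℝ) : penalize φ x₀ t₀ x₀ t₀ = φ x₀ t₀ := by
  simp [penalize]

lemma C21.penalize (hφ : C21 φ) : C21 (penalize φ x₀ t₀) :=
  hφ.add ((c21_of_space (contDiff_norm_sub_pow_four x₀)).add
    (c21_of_time ((contDiff_id.sub contDiff_const).pow 2)))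

lemma gradAt_penalize_self (hφ : C21 φ) (t : ℝ) :
    gradAt (fun y => penalize φ x₀ t₀ y t) x₀ = gradAt (fun y => φ y t) x₀ := by
  have hquartic := contDiff_norm_sub_pow_four x₀
  unfold penalize
  rw [gradAt_add ((hφ.1 t).differentiable two_ne_zero x₀)
      ((hquartic.add contDiff_const).differentiable two_ne_zero x₀),
    gradAt_add (hquartic.differentiable two_ne_zero x₀) (differentiableAt_const _),
    gradAt_norm_sub_pow_four, gradAt_const, add_zero, add_zero]

lemma hessAt_penalize_self (hφ : C21 φ) (t : ℝ) :
    hessAt (fun y => penalize φ x₀ t₀ y t) x₀ = hessAt (fun y => φ y t) x₀ := by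
  have hquartic := contDiff_norm_sub_pow_four x₀
  unfold penalize
  rw [hessAt_add (hφ.1 t) (hquartic.add contDiff_const), hessAt_add hquartic contDiff_const,
    hessAt_norm_sub_pow_four, hessAt_const, add_zero, add_zero]

lemma deriv_penalize_self (hφ : C21 φ) (x : Eucl d) :
    deriv (penalize φ x₀ t₀ x) t₀ = deriv (φ x) t₀ := by
  have hsq := (((hasDerivAt_id t₀).sub_const t₀).pow 2).const_add (‖x - x₀‖ ^ 4)
  have hderiv := ((hφ.2.1 x).differentiable one_ne_zero t₀).hasDerivAt.add hsq
  exact hderiv.deriv.trans (by simp)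

end TestFunctions

section Limit

variable {d : ℕ} {Ω : Set (Eucl d)}
  {F : Matrix (Fin d) (Fin d) ℝ → Eucl d → ℝ → Eucl d → ℝ → ℝ} {φ : Eucl d → ℝ → ℝ}
  {x₀ : Eucl d} {t₀ h T : ℝ}

lemma C21.exists_forall_pos (hφ : C21 φ) (hΩ : IsOpen Ω)
    (hF : ContinuousOn
      (fun q : Matrix (Fin d) (Fin d) ℝ × Eucl d × ℝ × Eucl d × ℝ =>
        F q.1 q.2.1 q.2.2.1 q.2.2.2.1 q.2.2.2.2)
      (univ ×ˢ univ ×ˢ univ ×ˢ closure Ω ×ˢ Ici 0))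
    (hx₀ : x₀ ∈ Ω) (ht₀ : 0 < t₀)
    (hpos : 0 < deriv (φ x₀) t₀ +
      F (hessAt (fun y => φ y t₀) x₀) (gradAt (fun y => φ y t₀) x₀) (φ x₀ t₀) x₀ t₀) :
    ∃ r > 0, ∀ x t τ s, ‖x - x₀‖ < r → |t - t₀| < r → |τ - t₀| < r → |s - φ x₀ t₀| < r →
      0 < deriv (φ x) τ + F (hessAt (fun y => φ y t) x) (gradAt (fun y => φ y t) x) s x t := by
  obtain ⟨-, -, -, hhess, hgrad, hderiv⟩ := hφ
  let jet (p : Eucl d × ℝ × ℝ × ℝ) : Matrix (Fin d) (Fin d) ℝ × Eucl d × ℝ × Eucl d × ℝ :=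
    (hessAt (fun y => φ y p.2.1) p.1, gradAt (fun y => φ y p.2.1) p.1, p.2.2.2, p.1, p.2.1)
  let p₀ : Eucl d × ℝ × ℝ × ℝ := (x₀, t₀, t₀, φ x₀ t₀)
  have hxt : Continuous fun p : Eucl d × ℝ × ℝ × ℝ => (p.1, p.2.1) := by fun_prop
  have hxτ : Continuous fun p : Eucl d × ℝ × ℝ × ℝ => (p.1, p.2.2.1) := by fun_prop
  have hjet : Continuous jet :=
    (hhess.comp hxt).prodMk ((hgrad.comp hxt).prodMk (by fun_prop))
  have hdomain : univ ×ˢ univ ×ˢ univ ×ˢ closure Ω ×ˢ Ici (0 : ℝ) ∈ 𝓝 (jet p₀) :=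
    prod_mem_nhds univ_mem (prod_mem_nhds univ_mem (prod_mem_nhds univ_mem
      (prod_mem_nhds (mem_of_superset (hΩ.mem_nhds hx₀) subset_closure) (Ici_mem_nhds ht₀))))
  have hcont := (hderiv.comp hxτ).continuousAt.add
    ((hF.continuousAt hdomain).comp hjet.continuousAt)
  obtain ⟨r, hr, hball⟩ := Metric.eventually_nhds_iff.mp (hcont.eventually (lt_mem_nhds hpos))
  refine ⟨r, hr, fun x t τ s hx ht hτ hs => hball (y := (x, t, τ, s)) ?_⟩
  simp only [p₀, Prod.dist_eq, max_lt_iff, Real.dist_eq, dist_eq_norm x]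
  exact ⟨hx, ht, hτ, hs⟩

lemma floor_div_mul_mem_Ioc {t : ℝ} (hh : 0 < h) (ht : 0 ≤ t) :
    (⌊t / h⌋₊ : ℝ) * h ∈ Ioc (t - h) t := by
  have hle := Nat.floor_le (div_nonneg ht hh.le)
  have hlt := Nat.lt_floor_add_one (t / h)
  rw [le_div_iff₀ hh] at hle
  rw [div_lt_iff₀ hh] at hlt
  exact ⟨by linarith, hle⟩

lemma floor_natCast_mul_div (hh : h ≠ 0) (m : ℕ) : ⌊m * h / h⌋₊ = m := by
  rw [mul_div_cancel_right₀ _ hh, Nat.floor_natCast]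

lemma exists_forall_le_of_finite_of_isCompact {ι X : Type*} [TopologicalSpace X] {S : Set ι}
    {B : Set X} {f : ι → X → ℝ} (hS : S.Finite) (hSne : S.Nonempty) (hB : IsCompact B)
    (hBne : B.Nonempty) (hf : ∀ i, ContinuousOn (f i) B) :
    ∃ i ∈ S, ∃ x ∈ B, ∀ j ∈ S, ∀ y ∈ B, f j y ≤ f i x := by
  choose X hX hmax using fun i => hB.exists_isMaxOn hBne (hf i)
  obtain ⟨i, hi, hmaxS⟩ := S.exists_max_image (fun i => f i (X i)) hS hSne
  exact ⟨i, hi, X i, hX i, fun j hj y hy => (hmax j hy).trans (hmaxS j hj)⟩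

lemma finite_setOf_natCast_mul_mem_Icc (hh : 0 < h) (a b : ℝ) :
    {m : ℕ | (m * h : ℝ) ∈ Icc a b}.Finite :=
  (finite_Iic ⌊b / h⌋₊).subset fun _ hm => Nat.le_floor ((le_div_iff₀ hh).mpr hm.2)

lemma lt_of_pow_four_add_sq_lt {a b ρ : ℝ} (hρ : 0 < ρ) (hρ1 : ρ ≤ 1)
    (hlt : a ^ 4 + b ^ 2 < ρ ^ 4) : a < ρ ∧ |b| < ρ := by
  have hb : 0 ≤ b ^ 2 := sq_nonneg b
  have ha : 0 ≤ a ^ 4 := by positivity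
  have hpow : ρ ^ 4 ≤ ρ ^ 2 := pow_le_pow_of_le_one hρ.le hρ1 (by norm_num)
  exact ⟨lt_of_pow_lt_pow_left₀ 4 hρ.le (by linarith), abs_lt_of_sq_lt_sq (by linarith) hρ.le⟩

lemma RotheStep.exists_deriv_add_nonpos {k : ℕ} {z z' : Eucl d → ℝ}
    (hstep : RotheStep Ω F h k z z') (hh : 0 < h) (hφ : C21 φ) {x : Eucl d} (hx : x ∈ Ω)
    (hloc : IsLocalMax (fun y => z' y - φ y ((k + 1) * h)) x)
    (hprev : z x - φ x (k * h) ≤ z' x - φ x ((k + 1) * h)) :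
    ∃ τ ∈ Ioo (k * h) ((k + 1) * h), deriv (φ x) τ +
      F (hessAt (fun y => φ y ((k + 1) * h)) x) (gradAt (fun y => φ y ((k + 1) * h)) x)
        (z' x) x ((k + 1) * h) ≤ 0 := by
  have hgap : (k + 1) * h - k * h = h := by ring
  have htime := hφ.2.1 x
  obtain ⟨τ, hτ, hslope⟩ := exists_deriv_eq_slope (φ x) (a := k * h) (b := (k + 1) * h)
    (by linarith) htime.continuous.continuousOn
    (htime.differentiable one_ne_zero).differentiableOn
  refine ⟨τ, hτ, ?_⟩
  have hvisc := hstep.2.1.1 x hx _ (hφ.1 _).contDiffAt hloc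
  have hderiv : deriv (φ x) τ ≤ z' x / h - z x / h := by
    rw [hslope, hgap, ← sub_div]
    exact div_le_div_of_nonneg_right (by linarith) hh.le
  linarith

/-- `u - φ` touches zero from below at `(x₀, t₀)`, with a definite gap away from that point, on
the backward cylinder of radius `ρ`. -/
structure TouchesStrictly (u : Eucl d × ℝ → ℝ) (φ : Eucl d → ℝ → ℝ) (x₀ : Eucl d) (t₀ ρ : ℝ) :
    Prop where
  eq : u (x₀, t₀) = φ x₀ t₀
  sub_le : ∀ x ∈ closedBall x₀ ρ, ∀ t ∈ Icc (t₀ - ρ) t₀,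
    u (x, t) - φ x t ≤ -(‖x - x₀‖ ^ 4 + (t - t₀) ^ 2)

lemma TouchesStrictly.exists_grid_max {u : Eucl d × ℝ → ℝ} {z : ℕ → Eucl d → ℝ} {ρ η : ℝ}
    (hu : TouchesStrictly u φ x₀ t₀ ρ) (hφ : ∀ t, Continuous fun x => φ x t) (hh : 0 < h)
    (hhρ : h ≤ ρ) (hρ2 : ρ ≤ 2) (hρt : ρ < t₀) (hη : 3 * η < (ρ / 2) ^ 4)
    (hz : ∀ m, ContinuousOn (z m) (closedBall x₀ ρ))
    (hzu : ∀ x ∈ closedBall x₀ ρ, ∀ t ∈ Icc (t₀ - ρ) t₀, |z ⌊t / h⌋₊ x - u (x, t)| ≤ η)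
    (hφt : ∀ t ∈ Icc (t₀ - h) t₀, φ x₀ t ≤ φ x₀ t₀ + η) :
    ∃ m : ℕ, ∃ x, ‖x - x₀‖ < ρ / 2 ∧ |m * h - t₀| < ρ / 2 ∧ m * h ≤ t₀ ∧
      |z m x - φ x (m * h)| ≤ 2 * η ∧ ∀ k : ℕ, (k * h : ℝ) ∈ Icc (t₀ - ρ) t₀ →
        ∀ y ∈ closedBall x₀ ρ, z k y - φ y (k * h) ≤ z m x - φ x (m * h) := by
  have hρ : 0 < ρ := hh.trans_le hhρ
  have hx₀ : x₀ ∈ closedBall x₀ ρ := mem_closedBall_self hρ.le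
  have hfloor := floor_div_mul_mem_Ioc hh (hρ.trans hρt).le
  have hfloor' : (⌊t₀ / h⌋₊ * h : ℝ) ∈ Icc (t₀ - ρ) t₀ := ⟨by linarith [hfloor.1], hfloor.2⟩
  obtain ⟨m, hm, x, hx, hmax⟩ := exists_forall_le_of_finite_of_isCompact
    (f := fun k x => z k x - φ x (k * h)) (finite_setOf_natCast_mul_mem_Icc hh (t₀ - ρ) t₀)
    ⟨_, hfloor'⟩ (isCompact_closedBall x₀ ρ) ⟨x₀, hx₀⟩
    fun k => (hz k).sub (hφ _).continuousOn
  have hlower : -(2 * η) ≤ z m x - φ x (m * h) := by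
    have hzu₀ := hzu x₀ hx₀ t₀ ⟨by linarith, le_rfl⟩
    have hφ₀ := hφt _ ⟨hfloor.1.le, hfloor.2⟩
    linarith [(abs_le.mp hzu₀).1, hmax _ hfloor' x₀ hx₀, hu.eq]
  have hupper : z m x - φ x (m * h) ≤ η - (‖x - x₀‖ ^ 4 + (m * h - t₀) ^ 2) := by
    have hzum := hzu x hx (m * h) hm
    rw [floor_natCast_mul_div hh.ne'] at hzum
    linarith [(abs_le.mp hzum).2, hu.sub_le x hx (m * h) hm]
  have hgap : 0 ≤ ‖x - x₀‖ ^ 4 + (m * h - t₀) ^ 2 := by positivity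
  obtain ⟨hxρ, htρ⟩ := lt_of_pow_four_add_sq_lt (half_pos hρ) (by linarith)
    (show ‖x - x₀‖ ^ 4 + (m * h - t₀) ^ 2 < (ρ / 2) ^ 4 by linarith)
  exact ⟨m, x, hxρ, htρ, hm.2, abs_le.mpr ⟨hlower, by linarith⟩, hmax⟩

-- Comparing a grid maximum with the preceding time level bounds the discrete time derivative.
lemma IsRothe.exists_deriv_add_nonpos {u : Eucl d × ℝ → ℝ} {z : ℕ → Eucl d → ℝ} {ρ η : ℝ}
    (hz : IsRothe Ω F h z) (hu : TouchesStrictly u φ x₀ t₀ ρ) (hφ : C21 φ) (hh : 0 < h)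
    (hhρ : h ≤ ρ / 2) (hρ2 : ρ ≤ 2) (hρt : ρ < t₀) (hη : 3 * η < (ρ / 2) ^ 4)
    (hball : closedBall x₀ ρ ⊆ Ω)
    (hzu : ∀ x ∈ closedBall x₀ ρ, ∀ t ∈ Icc (t₀ - ρ) t₀, |z ⌊t / h⌋₊ x - u (x, t)| ≤ η)
    (hφt : ∀ t ∈ Icc (t₀ - h) t₀, φ x₀ t ≤ φ x₀ t₀ + η) :
    ∃ x ∈ closedBall x₀ ρ, ∃ t ∈ Icc (t₀ - ρ) t₀, ∃ τ ∈ Icc (t₀ - ρ) t₀, ∃ s,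
      |s - φ x t| ≤ 2 * η ∧ deriv (φ x) τ +
        F (hessAt (fun y => φ y t) x) (gradAt (fun y => φ y t) x) s x t ≤ 0 := by
  obtain ⟨m, x, hxρ, htρ, hmt, hs, hmax⟩ := hu.exists_grid_max (fun t => (hφ.1 t).continuous) hh
    (by linarith) hρ2 hρt hη
    (fun m => (hz.continuousOn m).mono (hball.trans subset_closure)) hzu hφt
  have hρ : 0 < ρ := by linarith
  have hx : x ∈ ball x₀ ρ := by
    rw [mem_ball, dist_eq_norm]
    linarith
  rw [abs_lt] at htρ
  obtain _ | k := m
  · rw [Nat.cast_zero, zero_mul] at htρ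
    linarith
  rw [Nat.cast_succ] at htρ hmt hs hmax
  have hmem : ((k + 1) * h : ℝ) ∈ Icc (t₀ - ρ) t₀ := ⟨by linarith, hmt⟩
  obtain ⟨τ, hτ, hle⟩ := (hz.2 k).exists_deriv_add_nonpos hh hφ (hball (ball_subset_closedBall hx))
    (mem_of_superset (isOpen_ball.mem_nhds hx) fun y hy => by
      have := hmax (k + 1) (by rwa [Nat.cast_succ]) y (ball_subset_closedBall hy)
      rwa [Nat.cast_succ] at this)
    (hmax k ⟨by linarith, by linarith⟩ x (ball_subset_closedBall hx))
  exact ⟨x, ball_subset_closedBall hx, _, hmem, τ, ⟨by linarith [hτ.1], by linarith [hτ.2]⟩, _, hs,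
    hle⟩

lemma exists_pos_forall_mem_closedBall_prod {P : Eucl d → ℝ → Prop}
    (hP : ∀ᶠ p in 𝓝 (x₀, t₀), P p.1 p.2) {b : ℝ} (hb : 0 < b) :
    ∃ ρ > 0, ρ < b ∧ ∀ x ∈ closedBall x₀ ρ, ∀ t ∈ closedBall t₀ ρ, P x t := by
  have hsmall := (tendsto_closedBall_smallSets (x₀, t₀)).eventually hP.smallSets
  obtain ⟨ρ, ⟨hρP, hρb⟩, hρ⟩ := (((hsmall.and (eventually_lt_nhds hb)).filter_mono
    nhdsWithin_le_nhds).and (self_mem_nhdsWithin (s := Ioi 0))).exists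
  exact ⟨ρ, hρ, hρb, fun x hx t ht => hρP (x, t) (by rw [← closedBall_prod_same]; exact ⟨hx, ht⟩)⟩

lemma eventually_forall_mem_Icc_sub_lt {g : ℝ → ℝ} (hg : ContinuousAt g t₀) {a : ℝ}
    (ha : g t₀ < a) : ∀ᶠ h in 𝓝 (0 : ℝ), ∀ t ∈ Icc (t₀ - h) t₀, g t < a := by
  filter_upwards [(tendsto_closedBall_smallSets t₀).eventually
    (hg.eventually_lt_const ha).smallSets] with h hlt t ht
  refine hlt t ?_
  rw [mem_closedBall, Real.dist_eq, abs_le]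
  constructor <;> linarith [ht.1, ht.2]

lemma exists_touchesStrictly_penalize (hφ : C21 φ) (hΩ : IsOpen Ω) (hx₀ : x₀ ∈ Ω)
    (ht₀ : t₀ ∈ Ioc 0 T) {u : Eucl d × ℝ → ℝ}
    (hmax : IsLocalMaxOn (fun q : Eucl d × ℝ => u q - φ q.1 q.2) (Ω ×ˢ Ioc 0 T) (x₀, t₀))
    (hval : u (x₀, t₀) - φ x₀ t₀ = 0) {r : ℝ} (hr : 0 < r) :
    ∃ ρ > 0, ρ < r ∧ ρ ≤ 2 ∧ ρ < t₀ ∧ closedBall x₀ ρ ⊆ Ω ∧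
      (∀ x ∈ closedBall x₀ ρ, ∀ t ∈ Icc (t₀ - ρ) t₀,
        |penalize φ x₀ t₀ x t - penalize φ x₀ t₀ x₀ t₀| < r / 2) ∧
      TouchesStrictly u (penalize φ x₀ t₀) x₀ t₀ ρ := by
  have hopen : ∀ᶠ p : Eucl d × ℝ in 𝓝 (x₀, t₀), p.1 ∈ Ω ∧ 0 < p.2 :=
    (hΩ.eventually_mem hx₀).prod_nhds (eventually_gt_nhds ht₀.1)
  have hclose : ∀ᶠ p : Eucl d × ℝ in 𝓝 (x₀, t₀),
      |penalize φ x₀ t₀ p.1 p.2 - penalize φ x₀ t₀ x₀ t₀| < r / 2 :=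
    ((hφ.penalize x₀ t₀).2.2.1.tendsto (x₀, t₀)).eventually
      (eventually_abs_sub_lt (penalize φ x₀ t₀ x₀ t₀) (half_pos hr))
  obtain ⟨ρ, hρ, hρb, hcyl⟩ := exists_pos_forall_mem_closedBall_prod
    (P := fun x t => ((x ∈ Ω ∧ 0 < t) ∧
      |penalize φ x₀ t₀ x t - penalize φ x₀ t₀ x₀ t₀| < r / 2) ∧
      ((x, t) ∈ Ω ×ˢ Ioc 0 T → u (x, t) - φ x t ≤ u (x₀, t₀) - φ x₀ t₀))
    ((hopen.and hclose).and (eventually_nhdsWithin_iff.mp hmax)) (lt_min hr two_pos)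
  have hback : Icc (t₀ - ρ) t₀ ⊆ closedBall t₀ ρ := by
    rw [Real.closedBall_eq_Icc]
    exact Icc_subset_Icc_right (by linarith)
  have hstart := hcyl x₀ (mem_closedBall_self hρ.le) _ (hback (left_mem_Icc.mpr (by linarith)))
  refine ⟨ρ, hρ, hρb.trans_le (min_le_left _ _), (hρb.trans_le (min_le_right _ _)).le,
    sub_pos.mp hstart.1.1.2, fun x hx => (hcyl x hx t₀ (mem_closedBall_self hρ.le)).1.1.1,
    fun x hx t ht => (hcyl x hx t (hback ht)).1.2, ?_, fun x hx t ht => ?_⟩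
  · rw [penalize_self]
    exact sub_eq_zero.mp hval
  · obtain ⟨⟨⟨hxΩ, ht0⟩, -⟩, hle⟩ := hcyl x hx t (hback ht)
    have := hle ⟨hxΩ, ht0, ht.2.trans ht₀.2⟩
    unfold penalize
    linarith

theorem parabolicViscSubsol_of_forall_eventually_abs_sub_le (hΩ : IsOpen Ω)
    (hF : ContinuousOn
      (fun q : Matrix (Fin d) (Fin d) ℝ × Eucl d × ℝ × Eucl d × ℝ =>
        F q.1 q.2.1 q.2.2.1 q.2.2.2.1 q.2.2.2.2)
      (univ ×ˢ univ ×ˢ univ ×ˢ closure Ω ×ˢ Ici 0))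
    {Z : ℝ → ℕ → Eucl d → ℝ} (hZ : ∀ h ∈ Ioc (0 : ℝ) 1, IsRothe Ω F h (Z h))
    {l : Filter ℝ} [l.NeBot] (hl : l ≤ 𝓝[>] 0) {u : Eucl d × ℝ → ℝ}
    (hu : ∀ η > 0, ∀ᶠ h in l, ∀ x ∈ closure Ω, ∀ t ∈ Icc 0 T,
      |Z h ⌊t / h⌋₊ x - u (x, t)| ≤ η) :
    ParabolicViscSubsol Ω T F u := by
  rintro φ hφ ε hε hstrict ⟨⟨x₀, t₀⟩, ⟨hx₀, ht₀⟩, hmax, hval⟩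
  have hψ := hφ.penalize x₀ t₀
  have hpos := hε.trans_le (hstrict x₀ (subset_closure hx₀) t₀ (Ioc_subset_Icc_self ht₀))
  rw [← hessAt_penalize_self x₀ t₀ hφ, ← gradAt_penalize_self x₀ t₀ hφ,
    ← deriv_penalize_self x₀ t₀ hφ, ← penalize_self x₀ t₀ φ] at hpos
  obtain ⟨r, hr, hpos⟩ := hψ.exists_forall_pos hΩ hF hx₀ ht₀.1 hpos
  obtain ⟨ρ, hρ, hρr, hρ2, hρt, hball, hclose, htouch⟩ :=
    exists_touchesStrictly_penalize hφ hΩ hx₀ ht₀ hmax hval hr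
  obtain ⟨η, hη, hηlt⟩ := exists_between (show 0 < min ((ρ / 2) ^ 4 / 3) (r / 4) by positivity)
  rw [lt_min_iff] at hηlt
  have hstep : ∀ᶠ h in l, h ∈ Ioc 0 (min 1 (ρ / 2)) := hl (Ioc_mem_nhdsGT (by positivity))
  have hψt := (eventually_forall_mem_Icc_sub_lt (hψ.2.1 x₀).continuous.continuousAt
    (lt_add_of_pos_right (penalize φ x₀ t₀ x₀ t₀) hη)).filter_mono (hl.trans nhdsWithin_le_nhds)
  obtain ⟨h, ⟨⟨hh, hhρ⟩, hψh⟩, hzu⟩ := ((hstep.and hψt).and (hu η hη)).exists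
  obtain ⟨hh1, hhρ⟩ := le_min_iff.mp hhρ
  have hback : ∀ t ∈ Icc (t₀ - ρ) t₀, t ∈ Icc 0 T ∧ |t - t₀| < r := fun t ht =>
    ⟨⟨by linarith [ht.1], ht.2.trans ht₀.2⟩,
      abs_lt.mpr ⟨by linarith [ht.1], by linarith [ht.2]⟩⟩
  obtain ⟨x, hx, t, ht, τ, hτ, s, hs, hle⟩ := (hZ h ⟨hh, hh1⟩).exists_deriv_add_nonpos htouch hψ hh
    hhρ hρ2 hρt (by linarith [hηlt.1]) hball
    (fun x hx t ht => hzu x (subset_closure (hball hx)) t (hback t ht).1)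
    fun t ht => (hψh t ht).le
  have hxr : ‖x - x₀‖ < r := by
    rw [← dist_eq_norm]
    exact (mem_closedBall.mp hx).trans_lt hρr
  have hsr : |s - penalize φ x₀ t₀ x₀ t₀| < r :=
    (abs_sub_le _ _ _).trans_lt (by linarith [hclose x hx t ht, hηlt.2])
  exact (hpos x t τ s hxr (hback t ht).2 (hback τ hτ).2 hsr).not_ge hle

end Limit

/-! ### Passage to the limit -/

section UniformLimit

variable {ι X Y : Type*} [PseudoMetricSpace X] [PseudoMetricSpace Y] {l : Filter ι} {S : Set X}
  {w : ι → X → Y} {u : X → Y}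

lemma continuousOn_of_tendsto_of_eventually_dist_le [l.NeBot]
    (hw : ∀ η > 0, ∃ δ > 0, ∀ᶠ i in l, ∀ p ∈ S, ∀ q ∈ S, dist p q < δ → dist (w i p) (w i q) ≤ η)
    (hu : ∀ p ∈ S, Tendsto (fun i => w i p) l (𝓝 (u p))) : ContinuousOn u S := by
  refine Metric.continuousOn_iff.mpr fun p hp ε hε => ?_
  obtain ⟨δ, hδ, hclose⟩ := hw (ε / 2) (half_pos hε)
  refine ⟨δ, hδ, fun q hq hqp => ?_⟩
  have hle : dist (u q) (u p) ≤ ε / 2 :=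
    le_of_tendsto ((hu q hq).dist (hu p hp)) (hclose.mono fun i hi => hi q hq p hp hqp)
  linarith

lemma tendstoUniformlyOn_of_tendsto_of_eventually_dist_le (hS : IsCompact S)
    (hw : ∀ η > 0, ∃ δ > 0, ∀ᶠ i in l, ∀ p ∈ S, ∀ q ∈ S, dist p q < δ → dist (w i p) (w i q) ≤ η)
    (hu : ∀ p ∈ S, Tendsto (fun i => w i p) l (𝓝 (u p))) : TendstoUniformlyOn w u l S := by
  obtain rfl | hl := l.eq_or_neBot
  · exact fun _ _ => eventually_bot
  have hcont := continuousOn_of_tendsto_of_eventually_dist_le hw hu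
  rw [← tendstoLocallyUniformlyOn_iff_tendstoUniformlyOn_of_compact hS,
    Metric.tendstoLocallyUniformlyOn_iff]
  intro ε hε p hp
  obtain ⟨δ, hδ, hclose⟩ := hw (ε / 3) (by positivity)
  refine ⟨S ∩ ball p δ ∩ {q | dist (u q) (u p) < ε / 3}, inter_mem
    (inter_mem_nhdsWithin S (ball_mem_nhds p hδ))
    ((hcont p hp).eventually (ball_mem_nhds (u p) (by positivity))), ?_⟩
  filter_upwards [hclose, (hu p hp).eventually (ball_mem_nhds (u p) (show 0 < ε / 3 by positivity))]
    with i hi hip q ⟨⟨hq, hqp⟩, (huq : dist (u q) (u p) < ε / 3)⟩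
  rw [dist_comm] at hip
  linarith [dist_triangle4_right (u q) (w i q) (u p) (w i p), hi q hq p hp hqp]

end UniformLimit

section Conclusion

variable {d : ℕ} {Ω : Set (Eucl d)}
  {F : Matrix (Fin d) (Fin d) ℝ → Eucl d → ℝ → Eucl d → ℝ → ℝ} {f : Eucl d → ℝ}
  {lam Lam gam C₀ K T : ℝ} {σ₁ σ₂ : ℝ → ℝ} {Z : ℝ → ℕ → Eucl d → ℝ} {u : Eucl d × ℝ → ℝ}

lemma StandingHypotheses.abs_rothe_floor_sub_le
    (H : StandingHypotheses Ω F lam Lam gam C₀ K σ₁ σ₂) {h : ℝ} {z : ℕ → Eucl d → ℝ}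
    (hh : h ∈ Ioc (0 : ℝ) 1) (hz : IsRothe Ω F h z) {x : Eucl d} (hx : x ∈ closure Ω) {t s : ℝ}
    (ht : t ∈ Icc 0 T) (hs : s ∈ Icc 0 T) :
    |z ⌊t / h⌋₊ x - z ⌊s / h⌋₊ x| ≤ (K + C₀ * T) * (|t - s| + h) := by
  wlog hst : s ≤ t generalizing s t
  · rw [abs_sub_comm, abs_sub_comm t s]
    exact this hs ht (le_of_not_ge hst)
  have hC : 0 ≤ K + C₀ * T :=
    add_nonneg H.K_nonneg (mul_nonneg H.C₀_nonneg (ht.1.trans ht.2))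
  obtain ⟨k, hk⟩ := Nat.exists_eq_add_of_le
    (Nat.floor_le_floor (div_le_div_of_nonneg_right hst hh.1.le))
  have htfloor := (floor_div_mul_mem_Ioc hh.1 ht.1).2
  have hsfloor := (floor_div_mul_mem_Ioc hh.1 hs.1).1
  rw [hk] at htfloor ⊢
  refine (H.abs_rothe_add_sub_le hh hz hx _ k (htfloor.trans ht.2)).trans
    (mul_le_mul_of_nonneg_left ?_ hC)
  push_cast at htfloor
  rw [abs_of_nonneg (by linarith)]
  linarith

lemma StandingHypotheses.exists_tendsto_rothe_floor
    (H : StandingHypotheses Ω F lam Lam gam C₀ K σ₁ σ₂)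
    (hZ : ∀ h ∈ Ioc (0 : ℝ) 1, IsRothe Ω F h (Z h)) (l : Ultrafilter ℝ)
    (hl : ∀ᶠ h in l, h ∈ Ioc (0 : ℝ) 1) {x : Eucl d} (hx : x ∈ closure Ω) {t : ℝ} (ht : 0 ≤ t) :
    ∃ a, Tendsto (fun h => Z h ⌊t / h⌋₊ x) l (𝓝 a) := by
  have hC : 0 ≤ K + C₀ * t := add_nonneg H.K_nonneg (mul_nonneg H.C₀_nonneg ht)
  have hbound : ∀ᶠ h in l, Z h ⌊t / h⌋₊ x ∈ closedBall (0 : ℝ) ((K + C₀ * t) * (t + 1)) := by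
    filter_upwards [hl] with h hh
    have hle := H.abs_rothe_floor_sub_le hh (hZ h hh) hx (right_mem_Icc.mpr ht)
      (left_mem_Icc.mpr ht)
    rw [zero_div, Nat.floor_zero, (hZ h hh).1 x, sub_zero, sub_zero, abs_of_nonneg ht] at hle
    rw [mem_closedBall_zero_iff]
    exact hle.trans (mul_le_mul_of_nonneg_left (by linarith [hh.2]) hC)
  obtain ⟨a, -, ha⟩ := (isCompact_closedBall _ _).ultrafilter_le_nhds
    (l.map fun h => Z h ⌊t / h⌋₊ x) (le_principal_iff.mpr hbound)
  exact ⟨a, ha⟩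

lemma StandingHypotheses.exists_eventually_dist_rothe_floor_le
    (H : StandingHypotheses Ω F lam Lam gam C₀ K σ₁ σ₂) (hf : IsDefiningFunction f Ω) (hT : 0 < T)
    (hZ : ∀ h ∈ Ioc (0 : ℝ) 1, IsRothe Ω F h (Z h)) {l : Filter ℝ} (hl : l ≤ 𝓝[>] 0)
    {η : ℝ} (hη : 0 < η) :
    ∃ δ > 0, ∀ᶠ h in l, ∀ p ∈ closure Ω ×ˢ Icc 0 T, ∀ q ∈ closure Ω ×ˢ Icc 0 T,
      dist p q < δ → dist (Z h ⌊p.2 / h⌋₊ p.1) (Z h ⌊q.2 / h⌋₊ q.1) ≤ η := by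
  have hC : 0 ≤ K + C₀ * T := add_nonneg H.K_nonneg (mul_nonneg H.C₀_nonneg hT.le)
  obtain ⟨δ, hδ, hspace⟩ := H.exists_abs_rothe_sub_le hf hT (half_pos hη)
  obtain ⟨τ, hτ, hτη⟩ := exists_pos_mul_lt (half_pos (half_pos hη)) (K + C₀ * T)
  refine ⟨min δ τ, lt_min hδ hτ, ?_⟩
  filter_upwards [hl (Ioc_mem_nhdsGT (lt_min one_pos hτ))] with h hh
  rintro ⟨x, t⟩ ⟨hx, ht⟩ ⟨y, s⟩ ⟨hy, hs⟩ hdist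
  obtain ⟨hh1, hhτ⟩ := le_min_iff.mp hh.2
  simp only [Prod.dist_eq, max_lt_iff, lt_min_iff, dist_eq_norm x, Real.dist_eq] at hdist
  have hz := hZ h ⟨hh.1, hh1⟩
  have hxy := hspace h ⟨hh.1, hh1⟩ _ hz ⌊t / h⌋₊
    ((floor_div_mul_mem_Ioc hh.1 ht.1).2.trans ht.2) x hx y hy hdist.1.1
  have hts : (K + C₀ * T) * (|t - s| + h) ≤ (K + C₀ * T) * (τ + τ) :=
    mul_le_mul_of_nonneg_left (add_le_add hdist.2.2.le hhτ) hC
  have htime := H.abs_rothe_floor_sub_le ⟨hh.1, hh1⟩ hz hy ht hs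
  rw [Real.dist_eq]
  linarith [_root_.abs_sub_le (Z h ⌊t / h⌋₊ x) (Z h ⌊t / h⌋₊ y) (Z h ⌊s / h⌋₊ y)]

lemma StandingHypotheses.abs_sub_le_of_tendsto_rothe_floor
    (H : StandingHypotheses Ω F lam Lam gam C₀ K σ₁ σ₂)
    (hZ : ∀ h ∈ Ioc (0 : ℝ) 1, IsRothe Ω F h (Z h)) {l : Filter ℝ} [l.NeBot] (hl : l ≤ 𝓝[>] 0)
    {x : Eucl d} (hx : x ∈ closure Ω) {t s a b : ℝ} (ht : t ∈ Icc 0 T) (hs : s ∈ Icc 0 T)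
    (ha : Tendsto (fun h => Z h ⌊t / h⌋₊ x) l (𝓝 a))
    (hb : Tendsto (fun h => Z h ⌊s / h⌋₊ x) l (𝓝 b)) :
    |a - b| ≤ (K + C₀ * T) * |t - s| := by
  have hlim : Tendsto (fun h => (K + C₀ * T) * (|t - s| + h)) l
      (𝓝 ((K + C₀ * T) * (|t - s| + 0))) :=
    ((tendsto_id'.mpr (hl.trans nhdsWithin_le_nhds)).const_add _).const_mul _
  rw [add_zero] at hlim
  refine le_of_tendsto_of_tendsto (ha.sub hb).abs hlim ?_
  filter_upwards [hl (Ioc_mem_nhdsGT one_pos)] with h hh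
  exact H.abs_rothe_floor_sub_le hh (hZ h hh) hx ht hs

lemma ParabolicViscSubsol.neg (hu : ParabolicViscSubsol Ω T (negOp F) fun p => -u p) :
    ParabolicViscSupersol Ω T F u := by
  rintro φ hφ ε hε hstrict ⟨p, hp, hmin, hval⟩
  refine hu (fun x t => -φ x t) hφ.neg ε hε (fun x hx t ht => ?_)
    ⟨p, hp, hmin.neg.congr (Eventually.of_forall fun q => by ring) hp, by linarith⟩
  rw [deriv.fun_neg]
  simp only [negOp, hessAt_neg, gradAt_neg, neg_neg]
  linarith [hstrict x hx t ht]

lemma StandingHypotheses.parabolicViscSubsol_and_supersol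
    (H : StandingHypotheses Ω F lam Lam gam C₀ K σ₁ σ₂)
    (hZ : ∀ h ∈ Ioc (0 : ℝ) 1, IsRothe Ω F h (Z h)) {l : Filter ℝ} [l.NeBot] (hl : l ≤ 𝓝[>] 0)
    (hu : TendstoUniformlyOn (fun h p => Z h ⌊p.2 / h⌋₊ p.1) u l (closure Ω ×ˢ Icc 0 T)) :
    ParabolicViscSubsol Ω T F u ∧ ParabolicViscSupersol Ω T F u := by
  rw [Metric.tendstoUniformlyOn_iff] at hu
  refine ⟨parabolicViscSubsol_of_forall_eventually_abs_sub_le H.isOpen H.continuousOn hZ hl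
      fun η hη => (hu η hη).mono fun h hh x hx t ht => ?_,
    (parabolicViscSubsol_of_forall_eventually_abs_sub_le (Z := fun h m x => -Z h m x)
      H.neg.isOpen H.neg.continuousOn (fun h hh => (hZ h hh).neg) hl
      fun η hη => (hu η hη).mono fun h hh x hx t ht => ?_).neg⟩
  · rw [abs_sub_comm]
    exact (hh (x, t) ⟨hx, ht⟩).le
  · rw [neg_sub_neg]
    exact (hh (x, t) ⟨hx, ht⟩).le

theorem exists_solution_lipschitz_in_time_general
    (H : StandingHypotheses Ω F lam Lam gam C₀ K σ₁ σ₂) (hf : IsDefiningFunction f Ω) (hT : 0 < T)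
    (hZ : ∀ h ∈ Ioc (0 : ℝ) 1, IsRothe Ω F h (Z h)) :
    ∃ u : Eucl d × ℝ → ℝ,
      ContinuousOn u (closure Ω ×ˢ Icc 0 T) ∧
      ParabolicViscSubsol Ω T F u ∧ ParabolicViscSupersol Ω T F u ∧
      (∀ x ∈ frontier Ω, ∀ t ∈ Icc (0 : ℝ) T, u (x, t) = 0) ∧
      (∀ x ∈ closure Ω, u (x, 0) = 0) ∧
      ∃ C : ℝ, ∀ x ∈ closure Ω, ∀ t ∈ Icc (0 : ℝ) T, ∀ s ∈ Icc (0 : ℝ) T,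
        |u (x, t) - u (x, s)| ≤ C * |t - s| := by
  let l := Ultrafilter.of (𝓝[>] (0 : ℝ))
  have hl : (l : Filter ℝ) ≤ 𝓝[>] 0 := Ultrafilter.of_le _
  have hl1 : ∀ᶠ h in l, h ∈ Ioc (0 : ℝ) 1 := hl (Ioc_mem_nhdsGT one_pos)
  choose! u hu using fun p (hp : p ∈ closure Ω ×ˢ Icc 0 T) =>
    H.exists_tendsto_rothe_floor hZ l hl1 hp.1 hp.2.1
  have hequi (η : ℝ) (hη : 0 < η) := H.exists_eventually_dist_rothe_floor_le hf hT hZ hl hη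
  have hunif := tendstoUniformlyOn_of_tendsto_of_eventually_dist_le
    (H.isBounded.isCompact_closure.prod isCompact_Icc) hequi hu
  obtain ⟨hsub, hsup⟩ := H.parabolicViscSubsol_and_supersol hZ hl hunif
  refine ⟨u, continuousOn_of_tendsto_of_eventually_dist_le hequi hu, hsub, hsup,
    fun x hx t ht => ?_, fun x hx => ?_, K + C₀ * T, fun x hx t ht s hs =>
      H.abs_sub_le_of_tendsto_rothe_floor hZ hl hx ht hs (hu (x, t) ⟨hx, ht⟩) (hu (x, s) ⟨hx, hs⟩)⟩
  · refine tendsto_nhds_unique_of_eventuallyEq (hu (x, t) ⟨frontier_subset_closure hx, ht⟩)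
      tendsto_const_nhds ?_
    filter_upwards [hl1] with h hh using (hZ h hh).eq_zero_of_mem_frontier hx _
  · refine tendsto_nhds_unique_of_eventuallyEq (hu (x, 0) ⟨hx, left_mem_Icc.mpr hT.le⟩)
      tendsto_const_nhds ?_
    filter_upwards [hl1] with h hh
    rw [zero_div, Nat.floor_zero, (hZ h hh).1]

end Conclusion

/-- **Lipschitz regularity in time.**  Under the standing hypotheses there is a continuous
function `u` on `closure Ω × [0,T]` which is a viscosity solution of
`u_t + F(D²u, Du, u, x, t) = 0` in `Ω × (0,T]`, vanishes on the parabolic boundary, and is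
Lipschitz in time. -/
theorem exists_solution_lipschitz_in_time (d : ℕ) (T lam Lam gam C₀ K : ℝ)
    (hT : 0 < T) (hlam : 0 < lam) (hlL : lam ≤ Lam) (hgam : 0 ≤ gam)
    (hC₀ : 0 ≤ C₀) (hK : 0 ≤ K)
    (Ω : Set (Eucl d)) (hΩopen : IsOpen Ω) (hΩbdd : Bornology.IsBounded Ω)
    (hΩsm : HasSmoothBoundary Ω)
    (F : Matrix (Fin d) (Fin d) ℝ → Eucl d → ℝ → Eucl d → ℝ → ℝ)
    (ω : ℝ → ℝ → ℝ) (σ₁ σ₂ : ℝ → ℝ)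
    (hFcont : ContinuousOn
      (fun q : Matrix (Fin d) (Fin d) ℝ × Eucl d × ℝ × Eucl d × ℝ =>
        F q.1 q.2.1 q.2.2.1 q.2.2.2.1 q.2.2.2.2)
      (univ ×ˢ univ ×ˢ univ ×ˢ closure Ω ×ˢ Ici 0))
    (hUE : UniformlyElliptic lam Lam (closure Ω) (Ici 0) F)
    (hStruct : StructureCondition lam Lam gam ω (closure Ω) (Ici 0) F)
    (hσ₁ : IsModulus σ₁) (hσ₂ : IsModulus σ₂)
    (hjoint : ∀ (M : Matrix (Fin d) (Fin d) ℝ) (P : Eucl d) (r : ℝ),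
      ∀ x ∈ closure Ω, ∀ y ∈ closure Ω, ∀ t ∈ Ici (0:ℝ), ∀ s ∈ Ici (0:ℝ),
        |F M P r x t - F M P r y s| ≤ σ₁ ‖x - y‖ + σ₂ |t - s|)
    (hσ₂lin : ∀ h ∈ Ioc (0:ℝ) 1, σ₂ h ≤ C₀ * h)
    (hFK : ∀ x ∈ closure Ω, ∀ t ∈ Ici (0:ℝ), |F 0 0 0 x t| ≤ K)
    (Z : ℝ → ℕ → Eucl d → ℝ)
    (hZ : ∀ h ∈ Ioc (0:ℝ) 1, (∀ x, Z h 0 x = 0) ∧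
      ∀ m : ℕ, RotheStep Ω F h m (Z h m) (Z h (m + 1))) :
    ∃ u : Eucl d × ℝ → ℝ,
      ContinuousOn u (closure Ω ×ˢ Icc 0 T) ∧
      ParabolicViscSubsol Ω T F u ∧ ParabolicViscSupersol Ω T F u ∧
      (∀ x ∈ frontier Ω, ∀ t ∈ Icc (0:ℝ) T, u (x, t) = 0) ∧
      (∀ x ∈ closure Ω, u (x, 0) = 0) ∧
      ∃ C : ℝ, ∀ x ∈ closure Ω, ∀ t ∈ Icc (0:ℝ) T, ∀ s ∈ Icc (0:ℝ) T,
        |u (x, t) - u (x, s)| ≤ C * |t - s| := by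
  obtain ⟨f, hf⟩ := hΩsm.exists_isDefiningFunction
  exact exists_solution_lipschitz_in_time_general
    (StandingHypotheses.of_structureCondition hlam hlL hgam hC₀ hK hΩopen hΩbdd hFcont hStruct
      hσ₁ hσ₂ hjoint hσ₂lin hFK) hf hT hZ

end
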